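/- arXiv:2406.15800 — 12 statements merged into one kernel-verified Lean document; each statement's English description precedes it below -/
import Mathlib

section
/- Let N be a finite group (written multiplicatively as (N,·)). Then the following are equivalent: (1) for every binary operation ∘ on N such that (N,·,∘) is a skew brace, every subgroup of (N,∘) is a left ideal of (N,·,∘); (2) N is isomorphic to the cyclic group C₂ or to the Klein four-group C₂ × C₂, or N is cyclic of odd order and q does not divide p − 1 for all prime divisors p, q of |N|. -/
section SkewBraceDefs

variable {G : Type*}

/-- `op` is a group operation on `G` (associative, with identity and inverses). -/
def IsGroupOp (op : G → G → G) : Prop :=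
  (∀ a b c : G, op (op a b) c = op a (op b c)) ∧
  ∃ e : G, (∀ a : G, op e a = a ∧ op a e = a) ∧ ∀ a : G, ∃ b : G, op a b = e ∧ op b a = e

/-- `(G, *, op)` is a skew brace: `op` is a group operation and the brace relation
`a ∘ (b * c) = (a ∘ b) * a⁻¹ * (a ∘ c)` holds. -/
def IsSkewBrace [Group G] (op : G → G → G) : Prop :=
  IsGroupOp op ∧ ∀ a b c : G, op a (b * c) = op a b * a⁻¹ * op a c

/-- `S` is a subgroup of `(G, op)` (the two operations of a skew brace share the
identity `1`). -/
def IsCircSubgroup [Group G] (op : G → G → G) (S : Set G) : Prop :=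
  (1 : G) ∈ S ∧ (∀ a ∈ S, ∀ b ∈ S, op a b ∈ S) ∧
  ∀ a ∈ S, ∃ b ∈ S, op a b = 1 ∧ op b a = 1

/-- A left ideal of the skew brace `(G, *, op)`: a subgroup `I` of `(G, *)` with
`γ_a(I) ⊆ I` for all `a`, where `γ_a b = a⁻¹ * (a ∘ b)`. -/
def IsLeftIdeal [Group G] (op : G → G → G) (I : Subgroup G) : Prop :=
  ∀ a : G, ∀ b ∈ I, a⁻¹ * op a b ∈ I

/-- Additive version of `IsSkewBrace`: `a ∘ (b + c) = (a ∘ b) - a + (a ∘ c)`. -/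
def IsSkewBraceAdd [AddGroup G] (op : G → G → G) : Prop :=
  IsGroupOp op ∧ ∀ a b c : G, op a (b + c) = op a b - a + op a c

/-- Additive version of `IsCircSubgroup`. -/
def IsCircSubgroupAdd [AddGroup G] (op : G → G → G) (S : Set G) : Prop :=
  (0 : G) ∈ S ∧ (∀ a ∈ S, ∀ b ∈ S, op a b ∈ S) ∧
  ∀ a ∈ S, ∃ b ∈ S, op a b = 0 ∧ op b a = 0

/-- Additive version of `IsLeftIdeal`: `γ_a b = -a + (a ∘ b)`. -/
def IsLeftIdealAdd [AddGroup G] (op : G → G → G) (I : AddSubgroup G) : Prop :=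
  ∀ a : G, ∀ b ∈ I, -a + op a b ∈ I

end SkewBraceDefs

/-- Condition (1) of the theorem. -/
def PropOne (N : Type*) [Group N] : Prop :=
  ∀ op : N → N → N, IsSkewBrace op →
      ∀ S : Set N, IsCircSubgroup op S →
        ∃ I : Subgroup N, (I : Set N) = S ∧ IsLeftIdeal op I

/-- A gamma function: it yields the brace operation `a * γ a b`. -/
structure IsGam {N : Type*} [Group N] (γ : N → N → N) : Prop where
  mul : ∀ a b c, γ a (b * c) = γ a b * γ a c
  act : ∀ a b c, γ (a * b) c = γ a (γ b c)
  one : ∀ b, γ 1 b = b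
  inv : ∀ a b c, γ (γ a b) c = γ b c

namespace IsGam

variable {N : Type*} [Group N] {γ : N → N → N}

theorem map_one (h : IsGam γ) (a : N) : γ a 1 = 1 := by
  have := h.mul a 1 1
  simpa using this

theorem isSkewBrace (h : IsGam γ) : IsSkewBrace (fun a b => a * γ a b) := by
  refine ⟨⟨fun a b c => ?_, 1, fun a => ⟨?_, ?_⟩, fun a => ⟨γ a⁻¹ a⁻¹, ?_, ?_⟩⟩, fun a b c => ?_⟩
  · simp only [h.mul, h.act, mul_assoc]
    rw [h.inv]
  · simp [h.one]
  · simp [h.map_one]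
  · simp only
    rw [← h.act, mul_inv_cancel, h.one, mul_inv_cancel]
  · simp only
    rw [h.inv, ← h.mul, inv_mul_cancel, h.map_one]
  · simp [h.mul, mul_assoc]

/-- If `γ y y = y⁻¹` then `{1, y}` is a circle subgroup, so `y ^ 2 = 1`. -/
theorem sq_eq_one (h : IsGam γ) (H : PropOne N) (y : N) (hy : γ y y = y⁻¹) : y * y = 1 := by
  have hS : IsCircSubgroup (fun a b => a * γ a b) ({1, y} : Set N) := by
    refine ⟨by simp, ?_, ?_⟩
    · rintro a (rfl | rfl) b (rfl | rfl) <;> simp [h.one, h.map_one, hy]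
    · rintro a (rfl | rfl)
      · exact ⟨1, by simp, by simp [h.one]⟩
      · exact ⟨a, by simp, by simp [hy]⟩
  obtain ⟨I, hI, -⟩ := H _ h.isSkewBrace _ hS
  have hyI : y ∈ I := by
    rw [← SetLike.mem_coe, hI]; simp
  have : y * y ∈ (I : Set N) := I.mul_mem hyI hyI
  rw [hI] at this
  rcases this with h1 | h1
  · exact h1
  · simp at h1; simp [h1]

theorem mem_zpowers (h : IsGam γ) (H : PropOne N) (y : N) (hy : ∀ b, γ y b = b) (a : N) :
    γ a y ∈ Subgroup.zpowers y := by
  have hp : ∀ k ∈ Subgroup.zpowers y, ∀ b, γ k b = b := by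
    let K : Subgroup N :=
      { carrier := {k | ∀ b, γ k b = b}
        one_mem' := h.one
        mul_mem' := by
          intro k l hk hl b
          rw [h.act, hl b, hk b]
        inv_mem' := by
          intro k hk b
          have h1 : γ (k⁻¹ * k) b = b := by rw [inv_mul_cancel, h.one]
          rwa [h.act, hk b] at h1 }
    intro k hk
    have hle : Subgroup.zpowers y ≤ K := by
      rw [Subgroup.zpowers_le]; exact hy
    exact hle hk
  have hS : IsCircSubgroup (fun a b => a * γ a b) (Subgroup.zpowers y : Set N) := by
    refine ⟨one_mem _, ?_, ?_⟩
    · intro a ha b hb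
      simp only [hp a ha]
      exact mul_mem ha hb
    · intro a ha
      refine ⟨a⁻¹, inv_mem ha, ?_⟩
      simp [hp a ha, hp _ (inv_mem ha)]
  obtain ⟨I, hI, hL⟩ := H _ h.isSkewBrace _ hS
  have hI' : I = Subgroup.zpowers y := SetLike.coe_injective hI
  subst hI'
  simpa using hL a y (Subgroup.mem_zpowers y)

/-- Circle powers. -/
def cpow (γ : N → N → N) (y : N) : ℕ → N
  | 0 => 1
  | k + 1 => y * γ y (cpow γ y k)

theorem act_cpow (h : IsGam γ) (y : N) (k : ℕ) (b : N) : γ (cpow γ y k) b = (γ y)^[k] b := by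
  induction k with
  | zero => simp [cpow, h.one]
  | succ k ih => rw [cpow, h.act, h.inv, ih, Function.iterate_succ_apply']

theorem cpow_add (h : IsGam γ) (y : N) (k l : ℕ) :
    cpow γ y k * γ (cpow γ y k) (cpow γ y l) = cpow γ y (k + l) := by
  induction k with
  | zero => simp [cpow, h.one]
  | succ k ih =>
    rw [show k + 1 + l = (k + l) + 1 by ring, cpow, cpow, ← ih, h.mul, h.act, h.inv, mul_assoc]

theorem cpow_exists [Finite N] (h : IsGam γ) (H : PropOne N) (y : N) :
    ∃ k : ℕ, y⁻¹ * γ y y = cpow γ y k := by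
  -- period
  obtain ⟨m, hm, hm1⟩ : ∃ m, 0 < m ∧ cpow γ y m = 1 := by
    obtain ⟨a, b, hab, heq⟩ := Finite.exists_ne_map_eq_of_infinite (cpow γ y)
    have key : ∀ a b, a < b → cpow γ y a = cpow γ y b → ∃ m, 0 < m ∧ cpow γ y m = 1 := by
      intro a b hab heq
      refine ⟨b - a, by omega, ?_⟩
      have h1 := h.cpow_add y a (b - a)
      rw [show a + (b - a) = b by omega, ← heq, mul_eq_left] at h1
      have h2 := congrArg (γ (cpow γ y a)⁻¹) h1
      rwa [← h.act, inv_mul_cancel, h.one, h.map_one] at h2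
    rcases lt_or_gt_of_ne hab with h1 | h1
    · exact key a b h1 heq
    · exact key b a h1 heq.symm
  have hmk : ∀ k, cpow γ y (m * k) = 1 := by
    intro k
    induction k with
    | zero => simp [cpow]
    | succ k ih =>
      rw [Nat.mul_succ, ← h.cpow_add, ih, h.one, hm1, mul_one]
  have hS : IsCircSubgroup (fun a b => a * γ a b) (Set.range (cpow γ y)) := by
    refine ⟨⟨0, rfl⟩, ?_, ?_⟩
    · rintro _ ⟨k, rfl⟩ _ ⟨l, rfl⟩
      exact ⟨k + l, (h.cpow_add y k l).symm⟩
    · rintro _ ⟨k, rfl⟩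
      obtain ⟨m', rfl⟩ : ∃ m', m = m' + 1 := ⟨m - 1, by omega⟩
      refine ⟨cpow γ y (m' * k), ⟨_, rfl⟩, ?_, ?_⟩
      · simp only
        rw [h.cpow_add, show k + m' * k = (m' + 1) * k by ring, hmk]
      · simp only
        rw [h.cpow_add, show m' * k + k = (m' + 1) * k by ring, hmk]
  obtain ⟨I, hI, -⟩ := H _ h.isSkewBrace _ hS
  have h1 : y ∈ I := by
    rw [← SetLike.mem_coe, hI]; exact ⟨1, by simp [cpow, h.map_one]⟩
  have h2 : y * γ y y ∈ I := by
    rw [← SetLike.mem_coe, hI]; exact ⟨2, by simp [cpow, h.map_one]⟩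
  have h3 : y⁻¹ * γ y y ∈ (I : Set N) := by
    have : y⁻¹ * γ y y = y⁻¹ * y⁻¹ * (y * γ y y) := by group
    rw [this]
    exact I.mul_mem (I.mul_mem (I.inv_mem h1) (I.inv_mem h1)) h2
  rw [hI] at h3
  obtain ⟨k, hk⟩ := h3
  exact ⟨k, hk.symm⟩

end IsGam

theorem PropOne.normal {N : Type*} [Group N] (H : PropOne N) (K : Subgroup N) : K.Normal := by
  have hb : IsSkewBrace (fun a b : N => b * a) := by
    refine ⟨⟨fun a b c => by simp [mul_assoc], 1, by simp, fun a => ⟨a⁻¹, by simp⟩⟩, ?_⟩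
    intro a b c
    simp [mul_assoc]
  obtain ⟨I, hI, hL⟩ := H _ hb K ⟨K.one_mem, fun a ha b hb => K.mul_mem hb ha,
    fun a ha => ⟨a⁻¹, K.inv_mem ha, by simp⟩⟩
  have hI' : I = K := SetLike.coe_injective hI
  subst hI'
  refine ⟨fun n hn g => ?_⟩
  simpa [mul_assoc] using hL g⁻¹ n hn

section Abelian

/-- The gamma functions used for abelian groups. -/
theorem isGam_of_data {N R : Type*} [CommGroup N] [CommRing R] (Z : R → N) (τ lam : N → R) (ε : R)
    (hZ : ∀ r s, Z (r + s) = Z r * Z s) (hτ : ∀ a b, τ (a * b) = τ a + τ b)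
    (hτZ : ∀ r, τ (Z r) = ε * r) (hl : ∀ a b, lam (a * b) = lam a + lam b + ε * lam a * lam b)
    (hl1 : lam 1 = 0) (hlZ : ∀ b r, lam (b * Z r) = lam b) :
    IsGam (fun a b => b * Z (lam a * τ b)) := by
  have hZ0 : Z 0 = 1 := by simpa using hZ 0 0
  refine ⟨fun a b c => ?_, fun a b c => ?_, fun b => ?_, fun a b c => ?_⟩
  · simp only [hτ, mul_add, hZ]
    exact mul_mul_mul_comm _ _ _ _
  · simp only [hτ, hτZ, hl]
    rw [mul_assoc c, ← hZ]
    congr 2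
    ring
  · simp [hl1, hZ0]
  · simp [hlZ]

theorem isGam_inv {N : Type*} [CommGroup N] (χ : N → ZMod 2) (hχ : ∀ a b, χ (a * b) = χ a + χ b) :
    IsGam (fun a b => if χ a = 0 then b else b⁻¹) := by
  have h1 : χ 1 = 0 := by simpa using hχ 1 1
  have h2 : ∀ a, χ a⁻¹ = χ a := by
    intro a
    have := hχ a a⁻¹
    rw [mul_inv_cancel, h1] at this
    have h3 : ∀ u v : ZMod 2, 0 = u + v → v = u := by decide
    exact h3 _ _ this
  have h4 : ∀ u : ZMod 2, u ≠ 0 → u = 1 := by decide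
  refine ⟨fun a b c => ?_, fun a b c => ?_, fun b => ?_, fun a b c => ?_⟩
  · split_ifs
    · rfl
    · rw [mul_inv]
  · simp only [hχ]
    by_cases ha : χ a = 0 <;> by_cases hb : χ b = 0 <;> simp [ha, hb]
    rw [h4 _ ha, h4 _ hb]; intro h; exact absurd (by decide) h
  · simp [h1]
  · by_cases ha : χ a = 0 <;> simp [ha, h2]

theorem sq_one_of_even {N : Type*} [CommGroup N] (H : PropOne N) (χ : N → ZMod 2)
    (hχ : ∀ a b, χ (a * b) = χ a + χ b) (y : N) (hy : χ y = 1) (x : N) : x * x = 1 := by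
  have key : ∀ y, χ y = 1 → y * y = 1 := fun y hy =>
    (isGam_inv χ hχ).sq_eq_one H y (by simp [hy])
  have h4 : ∀ u : ZMod 2, u = 0 ∨ u = 1 := by decide
  rcases h4 (χ x) with h | h
  · have h1 := key (x * y) (by rw [hχ, h, hy]; decide)
    rw [mul_mul_mul_comm, key y hy, mul_one] at h1
    exact h1
  · exact key x h

/-- exclusion of rank at least three for `p = 2` -/
theorem not_three {N : Type*} [CommGroup N] (H : PropOne N) {p : ℕ} [Fact p.Prime]
    (χ τ σ : N → ZMod p) (hχ : ∀ a b, χ (a * b) = χ a + χ b) (hτ : ∀ a b, τ (a * b) = τ a + τ b)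
    (hσ : ∀ a b, σ (a * b) = σ a + σ b)
    (Z : ZMod p → N) (hZ : ∀ r s, Z (r + s) = Z r * Z s) (h1 : ∀ r, χ (Z r) = 0)
    (h2 : ∀ r, τ (Z r) = 0) (a b : N) (ha : χ a = 1) (hb : τ b = 1) (hb' : χ b = 0)
    (hσb : σ b = 0) (hσ1 : σ (Z 1) = 1) : False := by
  have hχ1 : χ 1 = 0 := by simpa using hχ 1 1
  have hG := isGam_of_data Z τ χ 0 hZ hτ (by simpa using h2) (by simpa using hχ) hχ1
    (by intro b r; rw [hχ, h1, add_zero])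
  have hZ0 : Z 0 = 1 := by simpa using hZ 0 0
  have := hG.mem_zpowers H b (by simp [hb', hZ0]) a
  simp only [ha, hb, mul_one] at this
  have h5 : ∀ x ∈ Subgroup.zpowers b, σ x = 0 := by
    let s : N →* Multiplicative (ZMod p) := MonoidHom.mk' (fun x => Multiplicative.ofAdd (σ x)) (by
      intro a b; simp [hσ])
    intro x hx
    have : Subgroup.zpowers b ≤ s.ker := by
      rw [Subgroup.zpowers_le]
      simpa [s, MonoidHom.mem_ker] using hσb
    simpa [s, MonoidHom.mem_ker] using this hx
  have h6 := h5 _ this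
  rw [hσ, hσb, hσ1, zero_add] at h6
  exact one_ne_zero h6

/-- exclusion of noncyclic odd Sylow subgroups -/
theorem not_two {N R : Type*} [CommGroup N] [Finite N] [CommRing R] (H : PropOne N) {p : ℕ}
    [Fact p.Prime]
    (hp2 : p ≠ 2) (χ : N → ZMod p) (σ : N → R) (hχ : ∀ a b, χ (a * b) = χ a + χ b)
    (hσ : ∀ a b, σ (a * b) = σ a + σ b)
    (Z : ZMod p → N) (hZ : ∀ r s, Z (r + s) = Z r * Z s) (h1 : ∀ r, χ (Z r) = 0)
    (y : N) (hy : χ y = 1) (hσy : σ y = 0) (hσ1 : σ (Z 1) ≠ 0) : False := by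
  have hχ1 : χ 1 = 0 := by simpa using hχ 1 1
  have hσ0 : σ 1 = 0 := by simpa using hσ 1 1
  have hZ0 : Z 0 = 1 := by simpa using hZ 0 0
  have hG := isGam_of_data Z χ χ 0 hZ hχ (by simpa using h1) (by simpa using hχ) hχ1
    (by intro b r; rw [hχ, h1, add_zero])
  obtain ⟨k, hk⟩ := hG.cpow_exists H y
  set γ : N → N → N := (fun a b => b * Z (χ a * χ b)) with hγ
  have e1 : ∀ k : ℕ, χ (IsGam.cpow γ y k) = k := by
    intro k
    induction k with
    | zero => simpa [IsGam.cpow] using hχ1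
    | succ k ih =>
      rw [IsGam.cpow, hχ, hγ]
      simp only
      rw [hχ, h1, ← hγ, ih, hy]; push_cast; ring
  have eZ : ∀ k : ℕ, σ (Z k) = k * σ (Z 1) := by
    intro k
    induction k with
    | zero => simp [hZ0, hσ0]
    | succ k ih => push_cast; rw [hZ, hσ, ih]; ring
  have e2 : ∀ k : ℕ, σ (IsGam.cpow γ y k) = (k * (k - 1) / 2 : ℕ) * σ (Z 1) := by
    intro k
    induction k with
    | zero => simpa [IsGam.cpow] using hσ0
    | succ k ih =>
      rw [IsGam.cpow, hσ, hγ]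
      simp only
      rw [hσ, ← hγ, ih, hy, e1, hσy, one_mul, eZ, Nat.triangle_succ]; push_cast; ring
  have hk2 : y⁻¹ * γ y y = Z 1 := by simp [hγ, hy]
  rw [hk2] at hk
  have hpk : p ∣ k := by
    have := congrArg χ hk
    rw [h1, e1] at this
    exact (ZMod.natCast_eq_zero_iff _ _).1 this.symm
  have hpk2 : p ∣ k * (k - 1) / 2 := by
    have hd : 2 ∣ k * (k - 1) := even_iff_two_dvd.1 (Nat.even_mul_pred_self k)
    have : p ∣ 2 * (k * (k - 1) / 2) := by
      rw [Nat.mul_div_cancel' hd]; exact hpk.mul_right _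
    refine (Nat.Coprime.dvd_mul_left ?_).1 this
    exact (Nat.coprime_primes (Fact.out) Nat.prime_two).2 hp2
  apply hσ1
  have h7 := congrArg σ hk
  rw [e2, ← eZ] at h7
  rw [h7, (ZMod.natCast_eq_zero_iff _ _).2 hpk2, hZ0, hσ0]

/-- exclusion of `q ∣ p - 1` -/
theorem not_pq {N R : Type*} [CommGroup N] [Finite N] [CommRing R] (H : PropOne N) {q : ℕ}
    [NeZero q] (χ : N → ZMod q) (τ : N → R) (hχ : ∀ a b, χ (a * b) = χ a + χ b)
    (hτ : ∀ a b, τ (a * b) = τ a + τ b)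
    (Z : R → N) (hZ : ∀ r s, Z (r + s) = Z r * Z s) (h1 : ∀ r, χ (Z r) = 0)
    (h2 : ∀ r, τ (Z r) = r) (u : R) (hu : u ^ q = 1) (hu1 : u ≠ 1) (hq : IsUnit (q : R))
    (y : N) (hy : χ y = 1) (hq1 : 1 < q) : False := by
  have hχ1 : χ 1 = 0 := by simpa using hχ 1 1
  have hτ1 : τ 1 = 0 := by simpa using hτ 1 1
  have hZ0 : Z 0 = 1 := by simpa using hZ 0 0
  have hv : ∀ a b : ZMod q, u ^ (a + b).val = u ^ a.val * u ^ b.val := by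
    intro a b
    rw [ZMod.val_add, ← pow_eq_pow_mod _ hu, pow_add]
  have hG := isGam_of_data Z τ (fun a => u ^ (χ a).val - 1) 1 hZ hτ (by simpa using h2)
    (by intro a b; simp only [hχ, hv]; ring) (by simp [hχ1])
    (by intro b r; rw [hχ, h1, add_zero])
  -- normalise `y` so that `τ y = 1`
  obtain ⟨w, hw, hw1⟩ : ∃ w, χ w = 1 ∧ τ w = 1 :=
    ⟨y * Z (1 - τ y), by rw [hχ, h1, hy, add_zero], by rw [hτ, h2]; ring⟩
  obtain ⟨k, hk⟩ := hG.cpow_exists H w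
  set γ : N → N → N := (fun a b => b * Z ((u ^ (χ a).val - 1) * τ b)) with hγ
  have hv1 : (1 : ZMod q).val = 1 := by
    rw [ZMod.val_one_eq_one_mod, Nat.mod_eq_of_lt hq1]
  have e1 : ∀ k : ℕ, χ (IsGam.cpow γ w k) = k := by
    intro k
    induction k with
    | zero => simpa [IsGam.cpow] using hχ1
    | succ k ih =>
      rw [IsGam.cpow, hχ, hγ]
      simp only
      rw [hχ, h1, ← hγ, ih, hw]; push_cast; ring
  have e2 : ∀ k : ℕ, τ (IsGam.cpow γ w k) * (u - 1) = u ^ k - 1 := by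
    intro k
    induction k with
    | zero => simp [IsGam.cpow, hτ1]
    | succ k ih =>
      rw [IsGam.cpow, hτ, hγ]
      simp only
      rw [hτ, h2, ← hγ, hw1, hw, hv1, pow_one]
      linear_combination u * ih
  have hk2 : w⁻¹ * γ w w = Z (u - 1) := by simp [hγ, hw, hw1, hv1]
  rw [hk2] at hk
  have hpk : q ∣ k := by
    have := congrArg χ hk
    rw [h1, e1] at this
    exact (ZMod.natCast_eq_zero_iff _ _).1 this.symm
  have hsq : (u - 1) * (u - 1) = 0 := by
    have h7 := congrArg τ hk
    rw [h2] at h7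
    nth_rewrite 1 [h7]
    rw [e2]
    obtain ⟨t, rfl⟩ := hpk
    rw [pow_mul, hu, one_pow, sub_self]
  have hpw : ∀ k : ℕ, u ^ k = 1 + k * (u - 1) := by
    intro k
    induction k with
    | zero => simp
    | succ k ih => rw [pow_succ, ih]; push_cast; linear_combination k * hsq
  have h8 := hpw q
  rw [hu] at h8
  have h9 : (q : R) * (u - 1) = 0 := by linear_combination -h8
  rw [hq.mul_right_eq_zero] at h9
  exact hu1 (sub_eq_zero.1 h9)

end Abelian

section Assembly

/-- The homomorphism `ZMod p → ZMod m` for `p ∣ m`. -/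
theorem exists_embed (p m : ℕ) (h : p ∣ m) :
    ∃ f : ZMod p →+ ZMod m, f 1 = ((m / p : ℕ) : ZMod m) := by
  refine ⟨ZMod.lift p ⟨zmultiplesHom _ ((m / p : ℕ) : ZMod m), ?_⟩, ?_⟩
  · simp only [zmultiplesHom_apply, natCast_zsmul, nsmul_eq_mul]
    rw [← Nat.cast_mul, Nat.mul_div_cancel' h, ZMod.natCast_self]
  · have := ZMod.lift_coe p ⟨zmultiplesHom _ ((m / p : ℕ) : ZMod m), by
      simp only [zmultiplesHom_apply, natCast_zsmul, nsmul_eq_mul]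
      rw [← Nat.cast_mul, Nat.mul_div_cancel' h, ZMod.natCast_self]⟩ (1 : ℤ)
    simpa using this

theorem forward_comm (N : Type*) [CommGroup N] [Finite N] (H : PropOne N) :
    (Nonempty (N ≃* Multiplicative (ZMod 2)) ∨
     Nonempty (N ≃* Multiplicative (ZMod 2 × ZMod 2)) ∨
     (IsCyclic N ∧ Odd (Nat.card N) ∧
      ∀ p q : ℕ, p.Prime → q.Prime → p ∣ Nat.card N → q ∣ Nat.card N → ¬ q ∣ p - 1)) := by
  classical
  obtain ⟨ι, _, p, hp, ex, ⟨E0⟩⟩ := AddCommGroup.equiv_directSum_zmod_of_finite (Additive N)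
  set n : ι → ℕ := fun i => p i ^ ex i with hn
  let E : Additive N ≃+ ((i : ι) → ZMod (n i)) := E0.trans (DirectSum.addEquivProd _)
  have hn0 : ∀ i, NeZero (n i) := fun i => ⟨pow_ne_zero _ (hp i).ne_zero⟩
  have hcard : Nat.card N = ∏ i, n i := by
    rw [← Nat.card_congr (Additive.ofMul (α := N)).symm, Nat.card_congr E.toEquiv, Nat.card_pi]
    simp
  let π : (i : ι) → N → ZMod (n i) := fun i x => E (Additive.ofMul x) i
  let inj : (i : ι) → ZMod (n i) → N := fun i r => Additive.toMul (E.symm (Pi.single i r))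
  have hπ : ∀ i a b, π i (a * b) = π i a + π i b := by intro i a b; simp [π]
  have hinj : ∀ i r s, inj i (r + s) = inj i r * inj i s := by
    intro i r s; simp [inj, Pi.single_add]
  have hpi : ∀ i r, π i (inj i r) = r := by intro i r; simp [π, inj]
  have hpij : ∀ i j r, i ≠ j → π i (inj j r) = 0 := by intro i j r h; simp [π, inj, h]
  clear_value π inj
  have hdvd : ∀ q : ℕ, q.Prime → q ∣ Nat.card N → ∃ i, q ∣ n i := by
    intro q hq h
    rw [hcard] at h
    obtain ⟨i, -, hi⟩ := (hq.prime.dvd_finsetProd_iff _).1 h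
    exact ⟨i, hi⟩
  -- reduced coordinates
  have hχ : ∀ (q : ℕ) i (h : q ∣ n i) a b, ZMod.castHom h (ZMod q) (π i (a * b)) =
      ZMod.castHom h (ZMod q) (π i a) + ZMod.castHom h (ZMod q) (π i b) := by
    intro q i h a b; rw [hπ, map_add]
  rcases Nat.even_or_odd (Nat.card N) with hev | hodd
  · obtain ⟨i0, hi0⟩ := hdvd 2 Nat.prime_two hev.two_dvd
    have hsq := sq_one_of_even H (fun x => ZMod.castHom hi0 (ZMod 2) (π i0 x)) (hχ 2 i0 hi0)
      (inj i0 1) (by rw [hpi, map_one])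
    have hn2 : ∀ l, n l = 1 ∨ n l = 2 := by
      intro l
      have h1 := congrArg (π l) (hsq (inj l 1))
      have h2 : π l 1 = 0 := by simpa using hπ l 1 1
      rw [hπ, hpi, h2] at h1
      have h3 : ((2 : ℕ) : ZMod (n l)) = 0 := by push_cast; rw [← h1]; norm_num
      rw [ZMod.natCast_eq_zero_iff] at h3
      exact (Nat.dvd_prime Nat.prime_two).1 h3
    set T := Finset.univ.filter (fun l => n l = 2) with hT
    have hcT : Nat.card N = 2 ^ T.card := by
      rw [hcard, ← Finset.prod_const, Finset.prod_filter]
      refine Finset.prod_congr rfl fun l _ => ?_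
      rcases hn2 l with h | h <;> simp [h]
    have hT2 : T.card ≤ 2 := by
      by_contra! hlt
      obtain ⟨i, hi, j, hj, l, hl, hij, hil, hjl⟩ := Finset.two_lt_card.1 hlt
      have hi2 : n i = 2 := by simpa [hT] using hi
      have hj2 : n j = 2 := by simpa [hT] using hj
      have hl2 : n l = 2 := by simpa [hT] using hl
      have hid : 2 ∣ n i := by rw [hi2]
      have hjd : 2 ∣ n j := by rw [hj2]
      have hld : 2 ∣ n l := by rw [hl2]
      obtain ⟨f, hf⟩ := exists_embed 2 (n l) hld
      have : Fact (Nat.Prime 2) := ⟨Nat.prime_two⟩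
      refine not_three H (p := 2) (fun x => ZMod.castHom hid (ZMod 2) (π i x))
        (fun x => ZMod.castHom hjd (ZMod 2) (π j x)) (fun x => ZMod.castHom hld (ZMod 2) (π l x))
        (hχ 2 i hid) (hχ 2 j hjd) (hχ 2 l hld) (fun r => inj l (f r))
        (fun r s => by rw [map_add, hinj]) (fun r => by rw [hpij _ _ _ hil, map_zero])
        (fun r => by rw [hpij _ _ _ hjl, map_zero]) (inj i 1) (inj j 1)
        (by rw [hpi, map_one]) (by rw [hpi, map_one])
        (by rw [hpij _ _ _ hij, map_zero])
        (by rw [hpij _ _ _ hjl.symm, map_zero]) ?_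

      rw [hpi, hf, map_natCast, hl2]; simp
    have hT0 : T.card ≠ 0 := by
      intro h0
      rw [h0, pow_zero] at hcT
      rw [hcT] at hev
      exact absurd hev (by decide)
    have hT12 : T.card = 1 ∨ T.card = 2 := by omega
    rcases hT12 with h | h
    · left
      rw [h, pow_one] at hcT
      have : Fact (Nat.Prime 2) := ⟨Nat.prime_two⟩
      exact ⟨mulEquivOfPrimeCardEq (p := 2) hcT (by simp)⟩
    · right; left
      rw [h] at hcT
      have : IsKleinFour N := ⟨by rw [hcT]; norm_num, by
        have hne : Nontrivial N := by
          rw [← Finite.one_lt_card_iff_nontrivial, hcT]; norm_num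
        exact (Monoid.exponent_eq_prime_iff Nat.prime_two).2 fun g hg =>
          orderOf_eq_prime (by rw [pow_two]; exact hsq g) hg⟩
      exact IsKleinFour.nonempty_mulEquiv
  · right; right
    have hcop : Pairwise (Function.onFun Nat.Coprime n) := by
      intro i j hij
      by_contra hc
      obtain ⟨r, hr, hri, hrj⟩ := Nat.Prime.not_coprime_iff_dvd.1 hc
      have : Fact r.Prime := ⟨hr⟩
      have hr2 : r ≠ 2 := by
        rintro rfl
        have : 2 ∣ Nat.card N := by
          rw [hcard]; exact hri.trans (Finset.dvd_prod_of_mem _ (Finset.mem_univ i))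
        exact (Nat.not_even_iff_odd.2 hodd) (even_iff_two_dvd.2 this)
      obtain ⟨f, hf⟩ := exists_embed r (n j) hrj
      refine not_two H hr2 (fun x => ZMod.castHom hri (ZMod r) (π i x)) (π j) (hχ r i hri) (hπ j)
        (fun s => inj j (f s)) (fun r s => by rw [map_add, hinj])
        (fun r => by rw [hpij _ _ _ hij, map_zero]) (inj i 1)
        (by rw [hpi, map_one]) (hpij _ _ _ hij.symm) ?_
      rw [hpi, hf, Ne, ZMod.natCast_eq_zero_iff]
      intro hd
      have hpos : 0 < n j := Nat.pos_of_ne_zero (hn0 j).out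
      have h1 := Nat.le_of_dvd (Nat.div_pos (Nat.le_of_dvd hpos hrj) hr.pos) hd
      exact absurd (Nat.div_lt_self hpos hr.one_lt) (not_lt.2 h1)
    refine ⟨?_, hodd, ?_⟩
    · let F : Additive N ≃+ ZMod (∏ i, n i) := E.trans (ZMod.prodEquivPi n hcop).symm.toAddEquiv
      have : IsAddCyclic (Additive N) := isAddCyclic_of_surjective F.symm F.symm.surjective
      exact isAddCyclic_additive_iff.1 this
    · intro a b ha hb haN hbN hba
      obtain ⟨i, hi⟩ := hdvd a ha haN
      obtain ⟨j, hj⟩ := hdvd b hb hbN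
      have hai : a = p i := (Nat.prime_dvd_prime_iff_eq ha (hp i)).1 (ha.dvd_of_dvd_pow hi)
      have hbj : b = p j := (Nat.prime_dvd_prime_iff_eq hb (hp j)).1 (hb.dvd_of_dvd_pow hj)
      have hba' : b < a := by
        have := Nat.le_of_dvd (by have := ha.two_le; omega) hba
        have := ha.two_le
        omega
      have hij : i ≠ j := by
        rintro rfl
        omega
      have : NeZero b := ⟨hb.ne_zero⟩
      have : Fact b.Prime := ⟨hb⟩
      have hcu : b ∣ Nat.card (ZMod (n i))ˣ := by
        rw [Nat.card_eq_fintype_card, ZMod.card_units_eq_totient]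
        refine hba.trans ?_
        rw [← Nat.totient_prime ha]
        exact Nat.totient_dvd_of_dvd hi
      obtain ⟨u, hu⟩ := exists_prime_orderOf_dvd_card' b hcu
      refine not_pq H (fun x => ZMod.castHom hj (ZMod b) (π j x)) (π i) (hχ b j hj) (hπ i) (inj i)
        (hinj i) (fun r => by rw [hpij _ _ _ hij.symm, map_zero]) (hpi i)
        (u : ZMod (n i)) ?_ ?_ ?_ (inj j 1) (by rw [hpi, map_one]) hb.one_lt
      · rw [← Units.val_pow_eq_pow_val, ← hu, pow_orderOf_eq_one, Units.val_one]
      · intro h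
        rw [Units.val_eq_one] at h
        rw [h, orderOf_one] at hu
        exact hb.ne_one hu.symm
      · rw [ZMod.isUnit_iff_coprime]
        refine Nat.Coprime.pow_right _ ?_
        rw [← hai]
        exact (Nat.coprime_primes hb ha).2 hba'.ne

end Assembly

section Dedekind

open scoped commutatorElement

variable {N : Type*} [Group N]

theorem zpowers_eq_of_order {x c : N} {p b : ℕ} (hp : p.Prime) (hx : orderOf x = p ^ (b + 1))
    (hc : orderOf c = p) (hcx : c ∈ Subgroup.zpowers x) :
    orderOf (x ^ p ^ b) = p ∧ Subgroup.zpowers c = Subgroup.zpowers (x ^ p ^ b) := by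
  have hfin : IsOfFinOrder x := orderOf_pos_iff.1 (by rw [hx]; exact pow_pos hp.pos _)
  have ho : orderOf (x ^ p ^ b) = p := by
    rw [orderOf_pow_of_dvd (pow_ne_zero _ hp.ne_zero) (by rw [hx]; exact pow_dvd_pow _ (by omega)),
      hx, pow_succ, Nat.mul_div_cancel_left _ (pow_pos hp.pos _)]
  refine ⟨ho, ?_⟩
  have hle : Subgroup.zpowers c ≤ Subgroup.zpowers (x ^ p ^ b) := by
    rw [Subgroup.zpowers_le]
    rw [← hfin.mem_powers_iff_mem_zpowers] at hcx
    obtain ⟨s, hs⟩ := hcx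
    simp only at hs
    have h1 : x ^ (s * p) = 1 := by rw [pow_mul, hs, ← hc, pow_orderOf_eq_one]
    rw [← orderOf_dvd_iff_pow_eq_one, hx, pow_succ] at h1
    obtain ⟨t, rfl⟩ := Nat.dvd_of_mul_dvd_mul_right hp.pos h1
    rw [← hs, pow_mul]
    exact Subgroup.npow_mem_zpowers _ _
  have hf : Finite (Subgroup.zpowers (x ^ p ^ b)) :=
    Nat.finite_of_card_ne_zero (by rw [Nat.card_zpowers, ho]; exact hp.ne_zero)
  exact Subgroup.eq_of_le_of_card_ge hle (by rw [Nat.card_zpowers, Nat.card_zpowers, ho, hc])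

theorem eq_of_order_two {c Y : N} (hc : orderOf c = 2) (hY : Y ∈ Subgroup.zpowers c) (h1 : Y ≠ 1) :
    Y = c := by
  have hfin : IsOfFinOrder c := orderOf_pos_iff.1 (by omega)
  rw [← hfin.mem_powers_iff_mem_zpowers] at hY
  obtain ⟨s, hs⟩ := hY
  simp only at hs
  have h2 : c ^ 2 = 1 := by rw [← hc, pow_orderOf_eq_one]
  rw [pow_eq_pow_mod s h2] at hs
  rcases Nat.mod_two_eq_zero_or_one s with h | h
  · rw [h, pow_zero] at hs; exact absurd hs.symm h1
  · rw [h, pow_one] at hs; exact hs.symm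

theorem dedekind_comm_mem (hD : ∀ K : Subgroup N, K.Normal) (g y : N) :
    ⁅g, y⁆ ∈ Subgroup.zpowers y ∧ ⁅g, y⁆ ∈ Subgroup.zpowers g := by
  have h1 := Subgroup.mem_zpowers y
  have h2 := Subgroup.mem_zpowers g
  constructor
  · exact mul_mem ((hD _).conj_mem y h1 g) (inv_mem h1)
  · have := mul_mem h2 ((hD _).conj_mem _ (inv_mem h2) y)
    rw [commutatorElement_def]
    simpa [mul_assoc] using this

theorem dedekind_central (hD : ∀ K : Subgroup N, K.Normal) (g h y : N) :
    ⁅g, h⁆ * y = y * ⁅g, h⁆ := by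
  have key : ∀ g h : N, (g * h) * y * (g * h)⁻¹ = (h * g) * y * (h * g)⁻¹ := by
    intro g h
    obtain ⟨s, hs⟩ := (hD _).conj_mem y (Subgroup.mem_zpowers y) g
    obtain ⟨t, ht⟩ := (hD _).conj_mem y (Subgroup.mem_zpowers y) h
    simp only at hs ht
    have e1 : (g * h) * y * (g * h)⁻¹ = g * (h * y * h⁻¹) * g⁻¹ := by group
    have e2 : (h * g) * y * (h * g)⁻¹ = h * (g * y * g⁻¹) * h⁻¹ := by group
    rw [e1, e2, ← hs, ← ht, ← conj_zpow, ← conj_zpow, ← hs, ← ht, ← zpow_mul, ← zpow_mul, mul_comm]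
  have h1 := key g⁻¹ h⁻¹
  have h2 : ⁅g, h⁆ * y * ⁅g, h⁆⁻¹ = (g * h) * ((g⁻¹ * h⁻¹) * y * (g⁻¹ * h⁻¹)⁻¹) * (g * h)⁻¹ := by
    rw [commutatorElement_def]; group
  rw [h1] at h2
  have h3 : (g * h) * ((h⁻¹ * g⁻¹) * y * (h⁻¹ * g⁻¹)⁻¹) * (g * h)⁻¹ = y := by group
  rw [h3] at h2
  exact mul_inv_eq_iff_eq_mul.1 h2

theorem dedekind_mul_right (hD : ∀ K : Subgroup N, K.Normal) (g a b : N) :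
    ⁅g, a * b⁆ = ⁅g, a⁆ * ⁅g, b⁆ := by
  have h : ⁅g, a * b⁆ = ⁅g, a⁆ * (a * ⁅g, b⁆ * a⁻¹) := by
    simp only [commutatorElement_def]; group
  rw [h, ← dedekind_central hD, mul_inv_cancel_right]

theorem dedekind_mul_left (hD : ∀ K : Subgroup N, K.Normal) (g h a : N) :
    ⁅g * h, a⁆ = ⁅g, a⁆ * ⁅h, a⁆ := by
  rw [← commutatorElement_inv a, dedekind_mul_right hD, mul_inv_rev, commutatorElement_inv,
    commutatorElement_inv, dedekind_central hD]

theorem dedekind_pow_right (hD : ∀ K : Subgroup N, K.Normal) (g a : N) (k : ℕ) :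
    ⁅g, a ^ k⁆ = ⁅g, a⁆ ^ k := by
  induction k with
  | zero => simp
  | succ k ih => rw [pow_succ, dedekind_mul_right hD, ih, pow_succ]

theorem dedekind_pow_left (hD : ∀ K : Subgroup N, K.Normal) (g a : N) (k : ℕ) :
    ⁅g ^ k, a⁆ = ⁅g, a⁆ ^ k := by
  induction k with
  | zero => simp
  | succ k ih => rw [pow_succ, dedekind_mul_left hD, ih, pow_succ]

theorem dedekind_mul_pow (hD : ∀ K : Subgroup N, K.Normal) (y h : N) (k : ℕ) :
    (y * h) ^ k = ⁅h, y⁆ ^ (k * (k - 1) / 2) * y ^ k * h ^ k := by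
  induction k with
  | zero => simp
  | succ k ih =>
    have e1 : h ^ k * y = ⁅h, y⁆ ^ k * y * h ^ k := by
      rw [← dedekind_pow_left hD, commutatorElement_def]; group
    have hc : ∀ (m : ℕ) (z : N), z * ⁅h, y⁆ ^ m = ⁅h, y⁆ ^ m * z := by
      intro m z
      rw [← dedekind_pow_left hD, dedekind_central hD]
    rw [pow_succ, ih, Nat.triangle_succ]
    calc ⁅h, y⁆ ^ (k * (k - 1) / 2) * y ^ k * h ^ k * (y * h)
        = ⁅h, y⁆ ^ (k * (k - 1) / 2) * y ^ k * (h ^ k * y) * h := by simp only [mul_assoc]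
      _ = ⁅h, y⁆ ^ (k * (k - 1) / 2) * (y ^ k * ⁅h, y⁆ ^ k) * y * h ^ k * h := by
          rw [e1]; simp only [mul_assoc]
      _ = _ := by rw [hc, pow_add, pow_succ, pow_succ]; simp only [mul_assoc]

/-- A nonabelian finite Dedekind group contains a quaternion group. -/
theorem dedekind_quaternion [Finite N] (hD : ∀ K : Subgroup N, K.Normal)
    (hne : ∃ a b : N, ⁅a, b⁆ ≠ 1) :
    ∃ g y : N, orderOf y = 4 ∧ orderOf g = 4 ∧ ⁅g, y⁆ = y ^ 2 ∧ ⁅g, y⁆ = g ^ 2 := by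
  obtain ⟨y, ⟨g0, hg0⟩, hymin⟩ := Set.exists_min_image {y : N | ∃ g, ⁅g, y⁆ ≠ 1} orderOf
    (Set.toFinite _) (by obtain ⟨a, b, h⟩ := hne; exact ⟨b, a, h⟩)
  obtain ⟨g, hg, hgmin⟩ := Set.exists_min_image {g : N | ⁅g, y⁆ ≠ 1} orderOf
    (Set.toFinite _) ⟨g0, hg0⟩
  simp only [Set.mem_ofPred_eq] at hg hymin hgmin
  set c := ⁅g, y⁆ with hc
  have hlt : ∀ (x : N) (q : ℕ), q.Prime → q ∣ orderOf x → orderOf (x ^ q) < orderOf x := by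
    intro x q hq hd
    rw [orderOf_pow_of_dvd hq.ne_zero hd]
    exact Nat.div_lt_self (orderOf_pos x) hq.one_lt
  have hy1 : y ≠ 1 := by rintro rfl; simp [hc] at hg
  have hg1 : g ≠ 1 := by rintro rfl; simp [hc] at hg
  have hqy : ∀ q : ℕ, q.Prime → q ∣ orderOf y → q = orderOf c := by
    intro q hq hd
    have h1 : c ^ q = 1 := by
      by_contra h
      rw [hc, ← dedekind_pow_right hD] at h
      exact absurd (hymin _ ⟨g, h⟩) (not_le.2 (hlt y q hq hd))
    exact (orderOf_eq_prime_iff (hp := ⟨hq⟩)).2 ⟨h1, hg⟩ |>.symm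
  have hqg : ∀ q : ℕ, q.Prime → q ∣ orderOf g → q = orderOf c := by
    intro q hq hd
    have h1 : c ^ q = 1 := by
      by_contra h
      rw [hc, ← dedekind_pow_left hD] at h
      exact absurd (hgmin _ h) (not_le.2 (hlt g q hq hd))
    exact (orderOf_eq_prime_iff (hp := ⟨hq⟩)).2 ⟨h1, hg⟩ |>.symm
  obtain ⟨p, hpc⟩ : ∃ p, p = orderOf c := ⟨_, rfl⟩
  have hp : p.Prime := by
    have h1 : orderOf y ≠ 1 := by rwa [Ne, orderOf_eq_one_iff]
    have := hqy _ (Nat.minFac_prime h1) (Nat.minFac_dvd _)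
    rw [hpc, ← this]
    exact Nat.minFac_prime h1
  have hyb : ∃ b, orderOf y = p ^ (b + 1) := by
    have h := Nat.eq_prime_pow_of_unique_prime_dvd (orderOf_pos y).ne'
      (fun {d} hd hdv => (hqy d hd hdv).trans hpc.symm)
    rcases hh : (orderOf y).primeFactorsList.length with _ | b
    · rw [hh, pow_zero, orderOf_eq_one_iff] at h; exact absurd h hy1
    · exact ⟨b, by rw [hh] at h; exact h⟩
  have hga : ∃ a, orderOf g = p ^ (a + 1) := by
    have h := Nat.eq_prime_pow_of_unique_prime_dvd (orderOf_pos g).ne'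
      (fun {d} hd hdv => (hqg d hd hdv).trans hpc.symm)
    rcases hh : (orderOf g).primeFactorsList.length with _ | b
    · rw [hh, pow_zero, orderOf_eq_one_iff] at h; exact absurd h hg1
    · exact ⟨b, by rw [hh] at h; exact h⟩
  obtain ⟨b, hyb⟩ := hyb
  obtain ⟨a, hga⟩ := hga
  have hgy : ⁅y, g⁆ ≠ 1 := by
    rw [← commutatorElement_inv, Ne, inv_eq_one]; exact hg
  have hba : b ≤ a := by
    have h1 := hymin g ⟨y, hgy⟩
    rw [hyb, hga] at h1
    have := (Nat.pow_le_pow_iff_right hp.one_lt).1 h1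
    omega
  obtain ⟨hcy, hcg⟩ := dedekind_comm_mem hD g y
  obtain ⟨hYo, hY⟩ := zpowers_eq_of_order hp hyb hpc.symm hcy
  obtain ⟨hGo, hG⟩ := zpowers_eq_of_order hp hga hpc.symm hcg
  obtain ⟨t, ht⟩ : ∃ t : ℕ, (g ^ p ^ a) ^ t = (y ^ p ^ b)⁻¹ := by
    have h1 : (y ^ p ^ b)⁻¹ ∈ Subgroup.zpowers (g ^ p ^ a) := by
      rw [← hG, hY]; exact inv_mem (Subgroup.mem_zpowers _)
    rw [← (isOfFinOrder_of_finite _).mem_powers_iff_mem_zpowers] at h1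
    exact h1
  -- the element of smaller order
  have hnd : ¬ p ∣ (p ^ (a - b) * t) * (p ^ b * (p ^ b - 1) / 2) := by
    intro hd
    have h1 : ⁅g, y * g ^ (p ^ (a - b) * t)⁆ ≠ 1 := by
      rw [dedekind_mul_right hD, dedekind_pow_right hD, commutatorElement_self, one_pow, mul_one]
      exact hg
    have h2 := hymin _ ⟨g, h1⟩
    have h3 : (y * g ^ (p ^ (a - b) * t)) ^ p ^ b = 1 := by
      rw [dedekind_mul_pow hD, dedekind_pow_left hD, ← pow_mul, ← hc]
      rw [orderOf_dvd_iff_pow_eq_one.1 (hpc ▸ hd), one_mul, ← pow_mul]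
      have : p ^ (a - b) * t * p ^ b = p ^ a * t := by
        rw [mul_right_comm, ← pow_add, Nat.sub_add_cancel hba]
      rw [this, pow_mul, ht, mul_inv_cancel]
    have h4 := orderOf_le_of_pow_eq_one (pow_pos hp.pos b) h3
    have h5 : p ^ b < p ^ (b + 1) := Nat.pow_lt_pow_right hp.one_lt (by omega)
    omega
  have hd2 : 2 ∣ p ^ b * (p ^ b - 1) := even_iff_two_dvd.1 (Nat.even_mul_pred_self _)
  have hb0 : b ≠ 0 := by
    rintro rfl
    apply hnd; simp
  have hp2 : p = 2 := by
    by_contra hp2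
    apply hnd
    apply Dvd.dvd.mul_left
    have : p ∣ 2 * (p ^ b * (p ^ b - 1) / 2) := by
      rw [Nat.mul_div_cancel' hd2]; exact (dvd_pow_self p hb0).mul_right _
    exact (Nat.Coprime.dvd_mul_left ((Nat.coprime_primes hp Nat.prime_two).2 hp2)).1 this
  subst hp2
  have hb1 : b = 1 := by
    by_contra hb1
    obtain ⟨b', rfl⟩ : ∃ b', b = b' + 2 := ⟨b - 2, by omega⟩
    apply hnd
    apply Dvd.dvd.mul_left
    rw [show 2 ^ (b' + 2) * (2 ^ (b' + 2) - 1) = 2 * (2 * (2 ^ b' * (2 ^ (b' + 2) - 1))) by ring,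
      Nat.mul_div_cancel_left _ two_pos]
    exact dvd_mul_right _ _
  subst hb1
  have ha1 : a = 1 := by
    by_contra ha1
    apply hnd
    apply Dvd.dvd.mul_right
    apply Dvd.dvd.mul_right
    exact dvd_pow_self 2 (by omega)
  subst ha1
  simp only [pow_one] at hYo hY hGo hG
  refine ⟨g, y, by rw [hyb]; norm_num, by rw [hga]; norm_num, ?_, ?_⟩
  · exact eq_of_order_two hYo (hY ▸ Subgroup.mem_zpowers c) hg
  · exact eq_of_order_two hGo (hG ▸ Subgroup.mem_zpowers c) hg

theorem PropOne.comm [Finite N] (H : PropOne N) (a b : N) : a * b = b * a := by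
  classical
  have hD := H.normal
  rw [← commutatorElement_eq_one_iff_mul_comm]
  by_contra hne
  obtain ⟨g, y, hy, hg, hcy, hcg⟩ := dedekind_quaternion hD ⟨a, b, hne⟩
  have hg2 : orderOf (g ^ 2) = 2 := by
    rw [orderOf_pow_of_dvd two_ne_zero (by rw [hg]; norm_num), hg]
  have hc1 : ⁅g, y⁆ ≠ 1 := by
    intro h
    rw [h] at hcg
    rw [← hcg, orderOf_one] at hg2
    omega
  have hval : ∀ x, ⁅g, x⁆ ≠ 1 → ⁅g, x⁆ = g ^ 2 := by
    intro x hx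
    have h2 : ⁅g, x⁆ ^ 2 = 1 := by
      rw [← dedekind_pow_left hD, ← hcg]
      exact commutatorElement_eq_one_iff_mul_comm.2 (dedekind_central hD g y x)
    have ho : orderOf ⁅g, x⁆ = 2 := orderOf_eq_prime h2 hx
    obtain ⟨-, h3⟩ := zpowers_eq_of_order (b := 1) Nat.prime_two (by rw [hg]; norm_num) ho
      (dedekind_comm_mem hD g x).2
    rw [pow_one] at h3
    exact eq_of_order_two hg2 (h3 ▸ Subgroup.mem_zpowers _) hx
  have hgg : ∀ x, g * (g * x * g⁻¹) * g⁻¹ = x := by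
    intro x
    have h1 := dedekind_central hD g y x
    rw [hcg] at h1
    have : g * (g * x * g⁻¹) * g⁻¹ = g ^ 2 * x * (g ^ 2)⁻¹ := by
      rw [pow_two]; group
    rw [this, h1, mul_inv_cancel_right]
  have hconj : ∀ x, ⁅g, g * x * g⁻¹⁆ = ⁅g, x⁆ := by
    intro x
    have h1 : ⁅g, g⁻¹⁆ = 1 := commutatorElement_eq_one_iff_mul_comm.2 (by simp)
    rw [dedekind_mul_right hD, dedekind_mul_right hD, commutatorElement_self, h1, one_mul, mul_one]
  have hgg2 : g ^ 2 * g ^ 2 = 1 := by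
    rw [← pow_add, show 2 + 2 = orderOf g from hg.symm, pow_orderOf_eq_one]
  have hG : IsGam (fun a b : N => if ⁅g, a⁆ = 1 then b else g * b * g⁻¹) := by
    refine ⟨fun a b c => ?_, fun a b c => ?_, fun b => by simp, fun a b c => ?_⟩
    · split_ifs
      · rfl
      · group
    · rw [dedekind_mul_right hD]
      by_cases ha : ⁅g, a⁆ = 1 <;> by_cases hb : ⁅g, b⁆ = 1
      · simp [ha, hb]
      · simp [ha, hb]
      · simp [ha, hb]
      · have hab : ⁅g, a⁆ * ⁅g, b⁆ = 1 := by rw [hval _ ha, hval _ hb, hgg2]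
        rw [if_pos hab, if_neg ha, if_neg hb, hgg]
    · by_cases ha : ⁅g, a⁆ = 1
      · simp [ha]
      · rw [if_neg ha, hconj]
  have h5 := hG.sq_eq_one H y (by
    rw [if_neg hc1]
    have h6 : g * y * g⁻¹ = ⁅g, y⁆ * y := by rw [commutatorElement_def]; group
    rw [h6, hcy]
    apply eq_inv_of_mul_eq_one_left
    have h7 : y ^ 4 = 1 := by rw [← hy, pow_orderOf_eq_one]
    rw [← h7]; group)
  rw [← pow_two] at h5
  have := orderOf_le_of_pow_eq_one two_pos h5
  omega

end Dedekind

section Reverse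

theorem circ_lagrange {N : Type*} [Finite N] (op : N → N → N) (e : N)
    (assoc : ∀ a b c : N, op (op a b) c = op a (op b c)) (hid : ∀ a : N, op e a = a ∧ op a e = a)
    (hinv : ∀ a : N, ∃ b : N, op a b = e ∧ op b a = e) (S : Set N) (he : e ∈ S)
    (hmul : ∀ a ∈ S, ∀ b ∈ S, op a b ∈ S) (hS : ∀ a ∈ S, ∃ b ∈ S, op a b = e ∧ op b a = e) :
    Nat.card S ∣ Nat.card N ∧ ∀ x ∈ S, (op x)^[Nat.card S] e = e := by
  choose inv hinv1 hinv2 using hinv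
  letI : Group N :=
    { mul := op
      one := e
      inv := inv
      mul_assoc := assoc
      one_mul := fun a => (hid a).1
      mul_one := fun a => (hid a).2
      inv_mul_cancel := hinv2 }
  let K : Subgroup N :=
    { carrier := S
      one_mem' := he
      mul_mem' := fun {a b} ha hb => hmul a ha b hb
      inv_mem' := fun {a} ha => by
        obtain ⟨b, hb, h1, -⟩ := hS a ha
        have : a⁻¹ = b := inv_eq_of_mul_eq_one_right h1
        rw [this]; exact hb }
  have hK : Nat.card S = Nat.card K := rfl
  refine ⟨K.card_subgroup_dvd_card, fun x hx => ?_⟩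
  have h1 : ∀ k : ℕ, (op x)^[k] e = x ^ k := by
    intro k
    induction k with
    | zero => rw [pow_zero]; rfl
    | succ k ih => rw [Function.iterate_succ_apply', ih, pow_succ']; rfl
  rw [h1, hK]
  have h2 : (⟨x, hx⟩ : K) ^ Nat.card K = 1 := pow_card_eq_one'
  have h3 := congrArg Subtype.val h2
  exact h3

section
variable {N : Type*} [Group N] {op : N → N → N}

theorem IsSkewBrace.op_one (h : IsSkewBrace op) (a : N) : op a 1 = a := by
  have := h.2 a 1 1
  rw [mul_one, mul_assoc, left_eq_mul] at this
  exact (inv_mul_eq_one.1 this).symm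

theorem IsSkewBrace.data (h : IsSkewBrace op) :
    (∀ a : N, op 1 a = a ∧ op a 1 = a) ∧ ∀ a : N, ∃ b : N, op a b = 1 ∧ op b a = 1 := by
  obtain ⟨⟨-, e, he, hinv⟩, -⟩ := id h
  have : e = 1 := by rw [← h.op_one e, (he 1).1]
  subst this
  exact ⟨he, hinv⟩

theorem IsSkewBrace.lagrange [Finite N] (h : IsSkewBrace op) {S : Set N}
    (hS : IsCircSubgroup op S) :
    Nat.card S ∣ Nat.card N ∧ ∀ x ∈ S, (op x)^[Nat.card S] 1 = 1 :=
  circ_lagrange op 1 h.1.1 h.data.1 h.data.2 S hS.1 hS.2.1 hS.2.2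

/-- the gamma homomorphisms -/
def IsSkewBrace.gam (h : IsSkewBrace op) (a : N) : N →* N :=
  MonoidHom.mk' (fun b => a⁻¹ * op a b) (by intro b c; rw [h.2]; group)

theorem IsSkewBrace.gam_apply (h : IsSkewBrace op) (a b : N) : h.gam a b = a⁻¹ * op a b := rfl

theorem IsSkewBrace.op_eq (h : IsSkewBrace op) (a b : N) : op a b = a * h.gam a b := by
  rw [h.gam_apply, mul_inv_cancel_left]

theorem IsSkewBrace.gam_op (h : IsSkewBrace op) (a b c : N) :
    h.gam (op a b) c = h.gam a (h.gam b c) := by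
  have h1 := h.1.1 a b c
  rw [h.op_eq (op a b) c, h.op_eq a b, h.op_eq a (op b c), h.op_eq b c, map_mul, mul_assoc] at h1
  rw [h.op_eq a b]
  exact mul_left_cancel (mul_left_cancel h1)

theorem IsSkewBrace.gam_one (h : IsSkewBrace op) (c : N) : h.gam 1 c = c := by
  rw [h.gam_apply, (h.data.1 c).1, inv_one, one_mul]

theorem small_case [Finite N] (hsq : ∀ x : N, x * x = 1) (hc : Nat.card N = 2 ∨ Nat.card N = 4) :
    PropOne N := by
  intro op h S hS
  have hd := (h.lagrange hS).1
  have hpos : 0 < Nat.card S := by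
    have : Nonempty S := ⟨⟨1, hS.1⟩⟩
    exact Nat.card_pos
  have hinvx : ∀ x : N, x⁻¹ = x := fun x => inv_eq_of_mul_eq_one_right (hsq x)
  have htop : Nat.card S = Nat.card N → ∃ I : Subgroup N, (I : Set N) = S ∧ IsLeftIdeal op I := by
    intro h1
    refine ⟨⊤, ?_, fun a b _ => Subgroup.mem_top _⟩
    have : S = Set.univ := Set.eq_of_subset_of_ncard_le (Set.subset_univ _)
      (by rw [Set.ncard_univ, ← h1]; exact le_of_eq (Nat.card_coe_set_eq S)) (Set.toFinite _)
    rw [this]; rfl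
  have hone : Nat.card S = 1 → ∃ I : Subgroup N, (I : Set N) = S ∧ IsLeftIdeal op I := by
    intro h1
    refine ⟨⊥, ?_, ?_⟩
    · rw [Nat.card_coe_set_eq, Set.ncard_eq_one] at h1
      obtain ⟨s, hs⟩ := h1
      have h2 := hS.1
      rw [hs] at h2 ⊢
      rw [Set.mem_singleton_iff] at h2
      rw [← h2]; rfl
    · intro a b hb
      rw [Subgroup.mem_bot] at hb ⊢
      rw [hb, h.op_one, inv_mul_cancel]
  have hle := Nat.le_of_dvd Nat.card_pos hd
  rcases hc with hc | hc
  · rw [hc] at hle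
    have : Nat.card S = 1 ∨ Nat.card S = 2 := by omega
    rcases this with h1 | h1
    · exact hone h1
    · exact htop (h1.trans hc.symm)
  · rw [hc] at hle hd
    have : Nat.card S = 1 ∨ Nat.card S = 2 ∨ Nat.card S = 4 := by
      generalize Nat.card S = d at *
      interval_cases d <;> simp_all
    rcases this with h1 | h1 | h1
    · exact hone h1
    · have h2 : ∃ s, S = {1, s} := by
        rw [Nat.card_coe_set_eq, Set.ncard_eq_two] at h1
        obtain ⟨x, y, hxy, hs⟩ := h1
        have h3 := hS.1
        rw [hs] at h3
        rcases h3 with rfl | h3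
        · exact ⟨y, hs⟩
        · rw [Set.mem_singleton_iff] at h3
          subst h3
          exact ⟨x, by rw [hs, Set.pair_comm]⟩
      obtain ⟨s, hs⟩ := h2
      let I : Subgroup N :=
        { carrier := S
          one_mem' := hS.1
          mul_mem' := by
            intro a b ha hb
            rw [hs] at ha hb ⊢
            rcases ha with rfl | rfl <;> rcases hb with rfl | rfl <;> simp [hsq]
          inv_mem' := by
            intro a ha
            rw [hinvx]; exact ha }
      have hI : I.index = 2 := by
        have h4 := I.card_mul_index
        have h5 : Nat.card I = 2 := h1
        rw [h5, hc] at h4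
        omega
      refine ⟨I, rfl, ?_⟩
      intro a b hb
      by_cases ha : a ∈ I
      · exact I.mul_mem (I.inv_mem ha) (hS.2.1 a ha b hb)
      · by_contra hn
        have h6 := (Subgroup.mul_mem_iff_of_index_two hI (a := a) (b := a⁻¹ * op a b)).2
          (iff_of_false ha hn)
        rw [mul_inv_cancel_left] at h6
        obtain ⟨b', hb', h7, -⟩ := hS.2.2 b hb
        have h8 := hS.2.1 _ h6 _ hb'
        rw [h.1.1, h7, h.op_one] at h8
        exact ha h8
    · exact htop (h1.trans hc.symm)

end

theorem lte_aux (v : ℤ) (o d : ℕ) (ho : ∀ p : ℕ, p.Prime → p ∣ o → Odd p ∧ (p : ℤ) ∣ v - 1)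
    (h : (o : ℤ) ∣ ∑ i ∈ Finset.range d, v ^ i) : o ∣ d := by
  by_cases hv : v = 1
  · subst hv
    simp at h
    exact_mod_cast h
  rw [Nat.dvd_iff_prime_pow_dvd_dvd]
  intro p k hp hk
  rcases Nat.eq_zero_or_pos k with rfl | hk0
  · simp
  obtain ⟨hodd, hpv⟩ := ho p hp ((dvd_pow_self p hk0.ne').trans hk)
  have hnv : ¬ (p : ℤ) ∣ v := by
    intro h1
    have h2 : (p : ℤ) ∣ 1 := by
      have := dvd_sub h1 hpv
      simpa using this
    exact hp.one_lt.ne' (by exact_mod_cast Int.eq_one_of_dvd_one (by positivity) h2)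
  have hl := Int.emultiplicity_pow_sub_pow hp hodd (x := v) (y := 1) hpv hnv d
  rw [one_pow, ← geom_sum_mul, emultiplicity_mul (Nat.prime_iff_prime_int.1 hp), add_comm] at hl
  have hfin : FiniteMultiplicity (p : ℤ) (v - 1) := by
    rw [Int.finiteMultiplicity_iff]
    refine ⟨?_, sub_ne_zero.2 hv⟩
    simpa using hp.one_lt.ne'
  have hne : emultiplicity (p : ℤ) (v - 1) ≠ ⊤ := by
    rwa [Ne, emultiplicity_eq_top, not_not]
  have h5 : emultiplicity (p : ℤ) (∑ i ∈ Finset.range d, v ^ i) = emultiplicity p d :=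
    ENat.add_right_injective_of_ne_top hne hl
  apply pow_dvd_of_le_emultiplicity
  rw [← h5]
  apply le_emultiplicity_of_pow_dvd
  exact dvd_trans (by exact_mod_cast hk) h

theorem cyclic_case (N : Type*) [CommGroup N] [Finite N] [IsCyclic N] (hodd : Odd (Nat.card N))
    (hpq : ∀ p q : ℕ, p.Prime → q.Prime → p ∣ Nat.card N → q ∣ Nat.card N → ¬ q ∣ p - 1) :
    PropOne N := by
  classical
  intro op h S hS
  obtain ⟨hdvd, hit⟩ := h.lagrange hS
  have hpos : 0 < Nat.card S := by
    have : Nonempty S := ⟨⟨1, hS.1⟩⟩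
    exact Nat.card_pos
  have huniv : IsCircSubgroup op (Set.univ : Set N) :=
    ⟨trivial, fun _ _ _ _ => trivial, fun a _ => by
      obtain ⟨b, hb⟩ := h.data.2 a
      exact ⟨b, trivial, hb⟩⟩
  have hitN : ∀ x : N, (op x)^[Nat.card N] 1 = 1 := by
    intro x
    have := (h.lagrange huniv).2 x trivial
    rwa [Nat.card_congr (Equiv.Set.univ N)] at this
  have hmain : ∀ x ∈ S, x ^ Nat.card S = 1 := by
    intro x hx
    obtain ⟨v, hv⟩ := (h.gam x).map_cyclic
    have hpow : ∀ k : ℕ, (op x)^[k] 1 = x ^ (∑ i ∈ Finset.range k, v ^ i) := by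
      intro k
      induction k with
      | zero => simp
      | succ k ih =>
        rw [Function.iterate_succ_apply', ih, h.op_eq, hv, ← zpow_mul, ← zpow_one_add,
          geom_sum_succ]
        congr 1; ring
    have hgam : ∀ (k : ℕ) (b : N), h.gam ((op x)^[k] 1) b = b ^ (v ^ k) := by
      intro k
      induction k with
      | zero => intro b; simp [h.gam_one]
      | succ k ih =>
        intro b
        rw [Function.iterate_succ_apply', h.gam_op, ih, hv, ← zpow_mul, pow_succ]
    have hvn : ((Nat.card N : ℕ) : ℤ) ∣ v ^ Nat.card N - 1 := by
      obtain ⟨g, hg⟩ := IsCyclic.exists_ofOrder_eq_natCard (α := N)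
      rw [← hg, orderOf_dvd_iff_zpow_eq_one, hg, zpow_sub, ← hgam, hitN, h.gam_one, zpow_one,
        mul_inv_cancel]
    have h1 := hit x hx
    rw [hpow, ← orderOf_dvd_iff_zpow_eq_one] at h1
    rw [← orderOf_dvd_iff_pow_eq_one]
    refine lte_aux v _ _ ?_ h1
    intro p hp hpo
    have hpN : p ∣ Nat.card N := hpo.trans (orderOf_dvd_natCard x)
    refine ⟨hodd.of_dvd_nat hpN, ?_⟩
    haveI : Fact p.Prime := ⟨hp⟩
    have h2 : (v : ZMod p) ^ Nat.card N = 1 := by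
      have h3 : (p : ℤ) ∣ v ^ Nat.card N - 1 := dvd_trans (by exact_mod_cast hpN) hvn
      have h4 := (ZMod.intCast_zmod_eq_zero_iff_dvd _ p).2 h3
      push_cast at h4
      exact sub_eq_zero.1 h4
    have hv0 : (v : ZMod p) ≠ 0 := by
      intro h0
      rw [h0, zero_pow Nat.card_pos.ne'] at h2
      exact zero_ne_one h2
    have h5 := ZMod.pow_card_sub_one_eq_one hv0
    have hcop : Nat.gcd (Nat.card N) (p - 1) = 1 := by
      by_contra hc
      obtain ⟨r, hr, hr1, hr2⟩ := Nat.Prime.not_coprime_iff_dvd.1 hc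
      exact hpq p r hp hr hpN hr1 hr2
    have h6 : (v : ZMod p) ^ Nat.gcd (Nat.card N) (p - 1) = 1 := by
      rw [← orderOf_dvd_iff_pow_eq_one]
      exact Nat.dvd_gcd (orderOf_dvd_of_pow_eq_one h2) (orderOf_dvd_of_pow_eq_one h5)
    rw [hcop, pow_one] at h6
    rw [← ZMod.intCast_zmod_eq_zero_iff_dvd _ p]
    push_cast
    rw [h6, sub_self]
  refine ⟨(powMonoidHom (Nat.card S) : N →* N).ker, ?_, ?_⟩
  · symm
    refine Set.eq_of_subset_of_ncard_le ?_ ?_ (Set.toFinite _)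
    · intro x hx
      exact hmain x hx
    · haveI := Fintype.ofFinite N
      have h1 := IsCyclic.card_pow_eq_one_le (α := N) hpos
      have h2 : (((powMonoidHom (Nat.card S) : N →* N).ker : Subgroup N) : Set N) =
          ((Finset.univ.filter fun a : N => a ^ Nat.card S = 1 : Finset N) : Set N) := by
        ext x
        simp [MonoidHom.mem_ker]
      rw [h2, Set.ncard_coe_finset]
      rw [← Nat.card_coe_set_eq S]
      exact h1
  · intro a b hb
    rw [MonoidHom.mem_ker, powMonoidHom_apply] at hb ⊢
    rw [← h.gam_apply, ← map_pow, hb, map_one]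

end Reverse

/-- **Theorem 1.2 / Problem 3.6.** For a finite group `N`, every subgroup of `(N, ∘)` is a
left ideal of `(N, ·, ∘)` for all skew brace operations `∘` on `N`, if and only if `N` is
isomorphic to `C₂` or `C₂ × C₂`, or `N` is cyclic of odd order with `q ∤ p - 1` for all
prime divisors `p, q` of `|N|`. -/
theorem every_circ_subgroup_left_ideal_iff (N : Type*) [Group N] [Finite N] :
    (∀ op : N → N → N, IsSkewBrace op →
      ∀ S : Set N, IsCircSubgroup op S →
        ∃ I : Subgroup N, (I : Set N) = S ∧ IsLeftIdeal op I) ↔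
    (Nonempty (N ≃* Multiplicative (ZMod 2)) ∨
     Nonempty (N ≃* Multiplicative (ZMod 2 × ZMod 2)) ∨
     (IsCyclic N ∧ Odd (Nat.card N) ∧
      ∀ p q : ℕ, p.Prime → q.Prime → p ∣ Nat.card N → q ∣ Nat.card N → ¬ q ∣ p - 1)) := by
  constructor
  · intro H
    have H' : PropOne N := H
    letI : CommGroup N := { (inferInstance : Group N) with mul_comm := H'.comm }
    exact forward_comm N H'
  · rintro (⟨⟨e⟩⟩ | ⟨⟨e⟩⟩ | ⟨hc, hodd, hpq⟩)
    · have hs : ∀ x : Multiplicative (ZMod 2), x * x = 1 := by decide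
      exact small_case (fun x => e.injective (by rw [map_mul, hs, map_one]))
        (Or.inl (by rw [Nat.card_congr e.toEquiv]; simp))
    · have hs : ∀ x : Multiplicative (ZMod 2 × ZMod 2), x * x = 1 := by decide
      exact small_case (fun x => e.injective (by rw [map_mul, hs, map_one]))
        (Or.inr (by rw [Nat.card_congr e.toEquiv]; simp))
    · letI : CommGroup N := IsCyclic.commGroup
      exact cyclic_case N hodd hpq
end

section
/- Let N be a finite group (written multiplicatively as (N,·)). If for every binary operation ∘ on N such that (N,·,∘) is a skew brace every subgroup of (N,∘) is a left ideal of (N,·,∘), then every subgroup of N is normal in N. -/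
/-- If every subgroup of `(N, ∘)` is a left ideal of `(N, ·, ∘)` for all skew brace
operations `∘` on the finite group `N`, then every subgroup of `N` is normal. -/
theorem every_subgroup_normal_of_good (N : Type*) [Group N] [Finite N]
    (h : ∀ op : N → N → N, IsSkewBrace op →
      ∀ S : Set N, IsCircSubgroup op S →
        ∃ I : Subgroup N, (I : Set N) = S ∧ IsLeftIdeal op I) :
    ∀ H : Subgroup N, H.Normal := by
  intro H
  have hb : IsSkewBrace (fun a b : N => b * a) := by
    refine ⟨⟨fun a b c => (mul_assoc c b a).symm, 1, fun a => ⟨mul_one a, one_mul a⟩,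
      fun a => ⟨a⁻¹, inv_mul_cancel a, mul_inv_cancel a⟩⟩, fun a b c => ?_⟩
    simp [mul_assoc]
  obtain ⟨I, hI, hl⟩ := h _ hb (H : Set N)
    ⟨H.one_mem, fun a ha b hb => H.mul_mem hb ha,
      fun a ha => ⟨a⁻¹, H.inv_mem ha, inv_mul_cancel a, mul_inv_cancel a⟩⟩
  obtain rfl : I = H := SetLike.coe_injective hI
  refine ⟨fun n hn g => ?_⟩
  have := hl g⁻¹ n hn
  simpa [mul_assoc] using this
end

section
/- Let N = (N,·) be a finite group that is the internal direct product of two subgroups M and M', i.e. N = M × M'. If M is bad (there exists a group operation ∘ on M such that (M,·,∘) is a skew brace and some subgroup of (M,∘) is not a left ideal of (M,·,∘)), then N is bad: there exists a group operation ∘' on N such that (N,·,∘') is a skew brace and some subgroup of (N,∘') is not a left ideal of (N,·,∘'). -/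
/-- **Lemma 2.9.** If `N = M × M'` is an internal direct product of subgroups and `M` is
bad (some skew brace operation on `M` has a `∘`-subgroup that is not a left ideal), then
`N` is bad as well. -/
theorem bad_of_direct_factor_bad (N : Type*) [Group N] [Finite N] (M M' : Subgroup N)
    (hM : M.Normal) (hM' : M'.Normal) (hinf : M ⊓ M' = ⊥) (hsup : M ⊔ M' = ⊤)
    (hbad : ∃ op : M → M → M, IsSkewBrace op ∧
      ∃ S : Set M, IsCircSubgroup op S ∧
        ¬ ∃ I : Subgroup M, (I : Set M) = S ∧ IsLeftIdeal op I) :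
    ∃ op' : N → N → N, IsSkewBrace op' ∧
      ∃ S : Set N, IsCircSubgroup op' S ∧
        ¬ ∃ I : Subgroup N, (I : Set N) = S ∧ IsLeftIdeal op' I := by
  classical
  obtain ⟨op, ⟨⟨hassoc, i, hi, hinv⟩, hbr⟩, S, ⟨hS1, hSop, hSinv⟩, hno⟩ := hbad
  have hcomm : ∀ (m : M) (n : M'), Commute (M.subtype m) (M'.subtype n) := fun m n =>
    Subgroup.commute_of_normal_of_disjoint M M' hM hM' (disjoint_iff.mpr hinf) m n m.2 n.2
  have hbij : Function.Bijective (MonoidHom.noncommCoprod M.subtype M'.subtype hcomm) := by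
    constructor
    · rw [injective_iff_map_eq_one]
      rintro ⟨⟨a, ha⟩, ⟨b, hb⟩⟩ h
      have h : a * b = 1 := by simpa using h
      have hab : a = b⁻¹ := eq_inv_of_mul_eq_one_left h
      have ha1 : a ∈ M ⊓ M' := ⟨ha, hab ▸ M'.inv_mem hb⟩
      rw [hinf, Subgroup.mem_bot] at ha1
      subst ha1
      have : b = 1 := by simpa using h
      subst this
      rfl
    · intro n
      have hn : n ∈ M ⊔ M' := hsup ▸ Subgroup.mem_top n
      obtain ⟨a, ha, b, hb, rfl⟩ := Subgroup.mem_sup_of_normal_left.mp hn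
      exact ⟨(⟨a, ha⟩, ⟨b, hb⟩), by simp⟩
  let f : M × M' ≃* N := MulEquiv.ofBijective _ hbij
  refine ⟨fun a b => f (op (f.symm a).1 (f.symm b).1, (f.symm a).2 * (f.symm b).2),
    ⟨⟨?_, f (i, 1), ?_, ?_⟩, ?_⟩, {n | (f.symm n).1 ∈ S}, ⟨?_, ?_, ?_⟩, ?_⟩
  · intro a b c
    simp [hassoc, mul_assoc]
  · intro a
    simp [hi]
  · intro a
    obtain ⟨b, h1, h2⟩ := hinv (f.symm a).1
    exact ⟨f (b, (f.symm a).2⁻¹), by simp [h1], by simp [h2]⟩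
  · intro a b c
    apply f.symm.injective
    ext1 <;> simp [hbr, mul_assoc]
  · simpa using hS1
  · intro a ha b hb
    simpa using hSop _ ha _ hb
  · intro a ha
    obtain ⟨b, hb, h1, h2⟩ := hSinv _ ha
    refine ⟨f (b, (f.symm a).2⁻¹), by simpa using hb, ?_, ?_⟩ <;>
    · apply f.symm.injective
      ext1 <;> simp [h1, h2]
  · rintro ⟨I, hI, hL⟩
    have hmem : ∀ n, n ∈ I ↔ (f.symm n).1 ∈ S := fun n => by
      rw [← SetLike.mem_coe, hI]; rfl
    have hJ : ∀ m : M, m ∈ I.comap (f.toMonoidHom.comp (MonoidHom.inl M M')) ↔ m ∈ S := by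
      intro m
      rw [Subgroup.mem_comap, hmem]
      simp
    refine hno ⟨I.comap (f.toMonoidHom.comp (MonoidHom.inl M M')), Set.ext hJ, ?_⟩
    intro a b hb
    rw [hJ] at hb ⊢
    have := hL (f (a, 1)) (f (b, 1)) (by rw [hmem]; simpa using hb)
    rw [hmem] at this
    simpa using this
end

section
/- Let Q₈ be the quaternion group of order 8 with presentation ⟨σ, τ ∣ σ⁴ = 1, σ² = τ², τστ⁻¹ = σ⁻¹⟩ and multiplication ·. The operation ∘ defined by σⁱτʲ ∘ σʳτˢ = σ^{i+r} τ^{j+(−1)^{i+j} s} (for all integers i,j,r,s) is a well-defined group operation on Q₈, the pair (Q₈,·,∘) is a skew brace, and the group (Q₈,∘) is isomorphic to the dihedral group of order 8. -/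
open QuaternionGroup in
/-- The circle operation on `Q₈` in Mathlib's normal form. -/
def circOp : QuaternionGroup 2 → QuaternionGroup 2 → QuaternionGroup 2
  | a i, a r => a (i + r)
  | a i, xa r => xa (r + i)
  | xa i, a r => xa (i - r)
  | xa i, xa r => a (i - r)

/-- The bijection `a i ↦ r (-i)`, `xa i ↦ sr i`. -/
def circEquiv : QuaternionGroup 2 ≃ DihedralGroup 4 where
  toFun
    | .a i => .r (-i : ZMod 4)
    | .xa i => .sr (i : ZMod 4)
  invFun
    | .r i => .a (-i : ZMod 4)
    | .sr i => .xa (i : ZMod 4)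
  left_inv := by rintro (i | i) <;> revert i <;> decide
  right_inv := by rintro (i | i) <;> revert i <;> decide

theorem a_one_zpow' (i : ℤ) :
    (QuaternionGroup.a 1 : QuaternionGroup 2) ^ i = QuaternionGroup.a (i : ZMod (2 * 2)) := by
  induction i using Int.induction_on with
  | zero => simp
  | succ n ih => rw [zpow_add_one, ih, QuaternionGroup.a_mul_a]; push_cast; rfl
  | pred n ih =>
    rw [zpow_sub_one, ih]
    change QuaternionGroup.a _ * QuaternionGroup.a (-1) = _
    rw [QuaternionGroup.a_mul_a]; push_cast; rw [sub_eq_add_neg]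

theorem xa_zpow_even (k : ℤ) :
    (QuaternionGroup.xa 0 : QuaternionGroup 2) ^ (2 * k) =
      QuaternionGroup.a ((2 * k : ℤ) : ZMod (2 * 2)) := by
  have h : (QuaternionGroup.xa 0 : QuaternionGroup 2) ^ (2 : ℤ) =
    (QuaternionGroup.a 1) ^ (2 : ℤ) := by decide
  rw [zpow_mul, h, ← zpow_mul, a_one_zpow']

theorem xa_zpow_odd (k : ℤ) :
    (QuaternionGroup.xa 0 : QuaternionGroup 2) ^ (2 * k + 1) =
      QuaternionGroup.xa ((- (2 * k) : ℤ) : ZMod (2 * 2)) := by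
  rw [zpow_add_one, xa_zpow_even, QuaternionGroup.a_mul_xa]
  congr 1; push_cast; ring

theorem exponent_eq {n m : ℤ} (h : n = m) :
    (QuaternionGroup.xa 0 : QuaternionGroup 2) ^ n = QuaternionGroup.xa 0 ^ m := by rw [h]

theorem circOp_formula (i j r s : ℤ) :
    circOp ((QuaternionGroup.a 1) ^ i * (QuaternionGroup.xa 0) ^ j)
           ((QuaternionGroup.a 1) ^ r * (QuaternionGroup.xa 0) ^ s) =
          (QuaternionGroup.a 1) ^ (i + r) *
            (QuaternionGroup.xa 0) ^ (j + ((i + j).negOnePow : ℤ) * s) := by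

  rcases Int.even_or_odd' i with ⟨i, rfl | rfl⟩ <;>
  rcases Int.even_or_odd' j with ⟨j, rfl | rfl⟩ <;>
  rcases Int.even_or_odd' s with ⟨s, rfl | rfl⟩
  · rw [Int.negOnePow_even _ (by grind), exponent_eq (n := _ + ((_ : ℤˣ) : ℤ) * _) (m := 2 * (j + s)) (by push_cast; ring)]
    simp only [a_one_zpow', xa_zpow_even, xa_zpow_odd, QuaternionGroup.a_mul_a,
      QuaternionGroup.a_mul_xa, circOp]
    congr 1
    simp only [← Int.cast_add, ← Int.cast_sub]
    rw [ZMod.intCast_eq_intCast_iff, Int.ModEq]; push_cast; omega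
  · rw [Int.negOnePow_even _ (by grind), exponent_eq (n := _ + ((_ : ℤˣ) : ℤ) * _) (m := 2 * (j + s) + 1) (by push_cast; ring)]
    simp only [a_one_zpow', xa_zpow_even, xa_zpow_odd, QuaternionGroup.a_mul_a,
      QuaternionGroup.a_mul_xa, circOp]
    congr 1
    simp only [← Int.cast_add, ← Int.cast_sub]
    rw [ZMod.intCast_eq_intCast_iff, Int.ModEq]; push_cast; omega
  · rw [Int.negOnePow_odd _ (by grind), exponent_eq (n := _ + ((_ : ℤˣ) : ℤ) * _) (m := 2 * (j - s) + 1) (by push_cast; ring)]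
    simp only [a_one_zpow', xa_zpow_even, xa_zpow_odd, QuaternionGroup.a_mul_a,
      QuaternionGroup.a_mul_xa, circOp]
    congr 1
    simp only [← Int.cast_add, ← Int.cast_sub]
    rw [ZMod.intCast_eq_intCast_iff, Int.ModEq]; push_cast; omega
  · rw [Int.negOnePow_odd _ (by grind), exponent_eq (n := _ + ((_ : ℤˣ) : ℤ) * _) (m := 2 * (j - s)) (by push_cast; ring)]
    simp only [a_one_zpow', xa_zpow_even, xa_zpow_odd, QuaternionGroup.a_mul_a,
      QuaternionGroup.a_mul_xa, circOp]
    congr 1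
    simp only [← Int.cast_add, ← Int.cast_sub]
    rw [ZMod.intCast_eq_intCast_iff, Int.ModEq]; push_cast; omega
  · rw [Int.negOnePow_odd _ (by grind), exponent_eq (n := _ + ((_ : ℤˣ) : ℤ) * _) (m := 2 * (j - s)) (by push_cast; ring)]
    simp only [a_one_zpow', xa_zpow_even, xa_zpow_odd, QuaternionGroup.a_mul_a,
      QuaternionGroup.a_mul_xa, circOp]
    congr 1
    simp only [← Int.cast_add, ← Int.cast_sub]
    rw [ZMod.intCast_eq_intCast_iff, Int.ModEq]; push_cast; omega
  · rw [Int.negOnePow_odd _ (by grind), exponent_eq (n := _ + ((_ : ℤˣ) : ℤ) * _) (m := 2 * (j - s - 1) + 1) (by push_cast; ring)]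
    simp only [a_one_zpow', xa_zpow_even, xa_zpow_odd, QuaternionGroup.a_mul_a,
      QuaternionGroup.a_mul_xa, circOp]
    congr 1
    simp only [← Int.cast_add, ← Int.cast_sub]
    rw [ZMod.intCast_eq_intCast_iff, Int.ModEq]; push_cast; omega
  · rw [Int.negOnePow_even _ (by grind), exponent_eq (n := _ + ((_ : ℤˣ) : ℤ) * _) (m := 2 * (j + s) + 1) (by push_cast; ring)]
    simp only [a_one_zpow', xa_zpow_even, xa_zpow_odd, QuaternionGroup.a_mul_a,
      QuaternionGroup.a_mul_xa, circOp]
    congr 1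
    simp only [← Int.cast_add, ← Int.cast_sub]
    rw [ZMod.intCast_eq_intCast_iff, Int.ModEq]; push_cast; omega
  · rw [Int.negOnePow_even _ (by grind), exponent_eq (n := _ + ((_ : ℤˣ) : ℤ) * _) (m := 2 * (j + s + 1)) (by push_cast; ring)]
    simp only [a_one_zpow', xa_zpow_even, xa_zpow_odd, QuaternionGroup.a_mul_a,
      QuaternionGroup.a_mul_xa, circOp]
    congr 1
    simp only [← Int.cast_add, ← Int.cast_sub]
    rw [ZMod.intCast_eq_intCast_iff, Int.ModEq]; push_cast; omega


/-- **Example 3.1.** On `Q₈ = ⟨σ, τ⟩` (with `σ = a 1`, `τ = xa 0` in Mathlib's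
`QuaternionGroup 2`), the operation `σⁱτʲ ∘ σʳτˢ = σ^(i+r) τ^(j + (-1)^(i+j) s)` is a
well-defined group operation, `(Q₈, ·, ∘)` is a skew brace, and `(Q₈, ∘)` is isomorphic
to the dihedral group of order `8`. -/
theorem quaternion_skew_brace_dihedral :
    ∃ op : QuaternionGroup 2 → QuaternionGroup 2 → QuaternionGroup 2,
      (∀ i j r s : ℤ,
        op ((QuaternionGroup.a 1) ^ i * (QuaternionGroup.xa 0) ^ j)
           ((QuaternionGroup.a 1) ^ r * (QuaternionGroup.xa 0) ^ s) =
          (QuaternionGroup.a 1) ^ (i + r) *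
            (QuaternionGroup.xa 0) ^ (j + ((i + j).negOnePow : ℤ) * s)) ∧
      IsSkewBrace op ∧
      ∃ e : QuaternionGroup 2 ≃ DihedralGroup 4, ∀ x y, e (op x y) = e x * e y := by
  refine ⟨circOp, circOp_formula, ⟨⟨by decide, 1, by decide, by decide⟩, by decide⟩, circEquiv, by decide⟩
end

section
/- The quaternion group Q₈ of order 8 is bad: there exists a group operation ∘ on Q₈ such that (Q₈,·,∘) is a skew brace and some subgroup of (Q₈,∘) is not a left ideal of (Q₈,·,∘). -/
/-- `a ∘ b = a * b` for `a ∈ ⟨i⟩`, and `a ∘ b = a * (j * b * j⁻¹)` otherwise. -/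
def qOp : QuaternionGroup 2 → QuaternionGroup 2 → QuaternionGroup 2
  | .a m, b => .a m * b
  | .xa m, b => .xa m * (.xa 0 * b * (.xa 0)⁻¹)

set_option maxRecDepth 100000 in
set_option maxHeartbeats 4000000 in
theorem qOp_assoc : ∀ a b c, qOp (qOp a b) c = qOp a (qOp b c) := by decide

set_option maxRecDepth 100000 in
set_option maxHeartbeats 4000000 in
theorem qOp_one : ∀ a, qOp 1 a = a ∧ qOp a 1 = a := by decide

set_option maxRecDepth 100000 in
set_option maxHeartbeats 4000000 in
theorem qOp_inv : ∀ a, ∃ b, qOp a b = 1 ∧ qOp b a = 1 := by decide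

set_option maxRecDepth 100000 in
set_option maxHeartbeats 4000000 in
theorem qOp_brace : ∀ a b c, qOp a (b * c) = qOp a b * a⁻¹ * qOp a c := by decide

/-- **Example 3.1.** The quaternion group `Q₈` is bad: some skew brace operation `∘` on
`Q₈` admits a `∘`-subgroup that is not a left ideal. -/
theorem quaternionGroup_bad :
    ∃ op : QuaternionGroup 2 → QuaternionGroup 2 → QuaternionGroup 2,
      IsSkewBrace op ∧
      ∃ S : Set (QuaternionGroup 2), IsCircSubgroup op S ∧
        ¬ ∃ I : Subgroup (QuaternionGroup 2), (I : Set (QuaternionGroup 2)) = S ∧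
          IsLeftIdeal op I := by
  have hk : qOp (.xa 1) (.xa 1) = 1 := by decide
  refine ⟨qOp, ⟨⟨qOp_assoc, 1, qOp_one, qOp_inv⟩, qOp_brace⟩, {1, .xa 1}, ⟨?_, ?_, ?_⟩, ?_⟩
  · exact Or.inl rfl
  · rintro a (rfl | rfl) b (rfl | rfl)
    · exact Or.inl (qOp_one 1).1
    · exact Or.inr (qOp_one _).1
    · exact Or.inr (qOp_one _).2
    · exact Or.inl hk
  · rintro a (rfl | rfl)
    · exact ⟨1, Or.inl rfl, qOp_one 1⟩
    · exact ⟨_, Or.inr rfl, hk, hk⟩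
  · rintro ⟨I, hI, -⟩
    have h1 : (QuaternionGroup.xa 1 : QuaternionGroup 2) ∈ I := by
      rw [← SetLike.mem_coe, hI]; exact Or.inr rfl
    have h2 := I.mul_mem h1 h1
    rw [← SetLike.mem_coe, hI] at h2
    rcases h2 with h | h
    · revert h; decide
    · revert h; decide
end

section
/- The elementary abelian group (ℤ/2ℤ)³ of order 8 is bad: there exists a group operation ∘ on (ℤ/2ℤ)³ such that ((ℤ/2ℤ)³, +, ∘) is a skew brace and some subgroup of ((ℤ/2ℤ)³, ∘) is not a left ideal of ((ℤ/2ℤ)³, +, ∘). In fact, for ∘ given by (i,j,k) ∘ (r,s,t) = (i+r+jt+ks, j+s, k+t), the set {0} × ℤ/2ℤ × ℤ/2ℤ is a subgroup under + but not under ∘. -/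
/-- **Example 3.2.** `(ℤ/2ℤ)³` is bad; in fact, for the skew brace operation
`(i,j,k) ∘ (r,s,t) = (i+r+jt+ks, j+s, k+t)`, the set `{0} × ℤ/2ℤ × ℤ/2ℤ` is a subgroup
under `+` but not under `∘`. -/
theorem elementary_abelian_rank_three_bad :
    (∃ op : ZMod 2 × ZMod 2 × ZMod 2 → ZMod 2 × ZMod 2 × ZMod 2 → ZMod 2 × ZMod 2 × ZMod 2,
      IsSkewBraceAdd op ∧
      ∃ S : Set (ZMod 2 × ZMod 2 × ZMod 2), IsCircSubgroupAdd op S ∧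
        ¬ ∃ I : AddSubgroup (ZMod 2 × ZMod 2 × ZMod 2),
          (I : Set (ZMod 2 × ZMod 2 × ZMod 2)) = S ∧ IsLeftIdealAdd op I) ∧
    ∀ op : ZMod 2 × ZMod 2 × ZMod 2 → ZMod 2 × ZMod 2 × ZMod 2 → ZMod 2 × ZMod 2 × ZMod 2,
      (∀ x y, op x y =
        (x.1 + y.1 + x.2.1 * y.2.2 + x.2.2 * y.2.1, x.2.1 + y.2.1, x.2.2 + y.2.2)) →
      (∃ I : AddSubgroup (ZMod 2 × ZMod 2 × ZMod 2),
        (I : Set (ZMod 2 × ZMod 2 × ZMod 2)) = {x | x.1 = 0}) ∧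
      ¬ IsCircSubgroupAdd op {x | x.1 = 0} := by
  refine ⟨⟨fun x y => (x.1 + y.1 + x.2.1 * y.2.2 + x.2.2 * y.2.1, x.2.1 + y.2.1, x.2.2 + y.2.2),
    ⟨⟨?_, 0, ?_, ?_⟩, ?_⟩, {x | x = 0 ∨ x = (0, 1, 0)}, ⟨?_, ?_, ?_⟩, ?_⟩, ?_⟩
  · rintro ⟨a, b, c⟩ ⟨d, e, f⟩ ⟨g, h, i⟩
    simp only [Prod.mk.injEq]
    refine ⟨?_, ?_, ?_⟩ <;> ring
  · rintro ⟨a, b, c⟩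
    simp
  · decide
  · rintro ⟨a, b, c⟩ ⟨d, e, f⟩ ⟨g, h, i⟩
    simp only [Prod.mk.injEq, Prod.mk_add_mk, Prod.mk_sub_mk]
    refine ⟨?_, ?_, ?_⟩ <;> ring
  · exact Or.inl rfl
  · rintro a (rfl | rfl) b (rfl | rfl) <;> simp only [Set.mem_ofPred_eq] <;> decide
  · simp only [Set.mem_ofPred_eq]
    decide
  · rintro ⟨I, hI, hL⟩
    have hb : ((0, 1, 0) : ZMod 2 × ZMod 2 × ZMod 2) ∈ I := by
      rw [← SetLike.mem_coe, hI]
      exact Or.inr rfl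
    have h := hL (0, 0, 1) _ hb
    rw [← SetLike.mem_coe, hI, Set.mem_ofPred_eq] at h
    revert h
    decide
  · intro op hop
    refine ⟨⟨(AddMonoidHom.fst (ZMod 2) (ZMod 2 × ZMod 2)).ker, ?_⟩, ?_⟩
    · ext x
      simp [AddSubgroup.mem_prod]
    · rintro ⟨-, h, -⟩
      have h1 := h (0, 1, 0) rfl (0, 0, 1) rfl
      rw [hop, Set.mem_ofPred_eq] at h1
      revert h1
      decide
end

section
/- Let k ≥ 1 and let n = 2k. On the cyclic group ℤ/nℤ with addition +, define i ∘ j = i + (−1)^i j. Then ∘ is a well-defined group operation on ℤ/nℤ, the pair (ℤ/nℤ, +, ∘) is a skew brace (in fact a brace), and the group (ℤ/nℤ, ∘) is isomorphic to the dihedral group of order n = 2k (with the conventions that the dihedral group of order 2 is C₂ and the dihedral group of order 4 is C₂ × C₂). -/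
/-- **Example 3.3.** Let `n = 2k` be even, `k ≥ 1`. On `ℤ/nℤ` the operation
`i ∘ j = i + (-1)^i j` is a well-defined group operation making `(ℤ/nℤ, +, ∘)` a skew
brace (in fact a brace), and `(ℤ/nℤ, ∘)` is isomorphic to the dihedral group of order
`n` (with `D₂ = C₂`, `D₄ = C₂ × C₂`; Mathlib's `DihedralGroup k` has order `2k`). -/
theorem cyclic_even_brace_dihedral (k : ℕ) (hk : 1 ≤ k) :
    ∃ op : ZMod (2 * k) → ZMod (2 * k) → ZMod (2 * k),
      (∀ i j : ℕ, op (i : ZMod (2 * k)) (j : ZMod (2 * k)) =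
        (i : ZMod (2 * k)) + (-1 : ZMod (2 * k)) ^ i * (j : ZMod (2 * k))) ∧
      IsSkewBraceAdd op ∧
      ∃ e : ZMod (2 * k) ≃ DihedralGroup k, ∀ x y, e (op x y) = e x * e y := by
  haveI : NeZero k := ⟨by omega⟩
  haveI : NeZero (2 * k) := ⟨by omega⟩
  let p : ZMod (2 * k) →+* ZMod 2 := ZMod.castHom (Dvd.intro k rfl) (ZMod 2)
  let D : ZMod k →+ ZMod (2 * k) :=
    ZMod.lift k ⟨(Int.castAddHom (ZMod (2 * k))).comp (AddMonoidHom.mulLeft (2 : ℤ)), by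
      have h := ZMod.natCast_self (2 * k)
      push_cast at h
      simpa using h⟩
  have hD : ∀ a : ℤ, D (a : ZMod k) = 2 * (a : ZMod (2 * k)) := by
    intro a
    simp [D]
  have h2 : (2 : ZMod 2) = 0 := rfl
  have h10 : (1 : ZMod 2) ≠ 0 := by decide
  have hpD : ∀ a, p (D a) = 0 := by
    intro a
    obtain ⟨a, rfl⟩ := ZMod.intCast_surjective a
    rw [hD, map_mul, map_ofNat, h2, zero_mul]
  have hDinj : Function.Injective D := by
    rw [injective_iff_map_eq_zero]
    intro a ha
    obtain ⟨a, rfl⟩ := ZMod.intCast_surjective a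
    rw [hD] at ha
    have h : ((2 * a : ℤ) : ZMod (2 * k)) = 0 := by push_cast; exact ha
    rw [ZMod.intCast_zmod_eq_zero_iff_dvd] at h ⊢
    push_cast at h
    exact (mul_dvd_mul_iff_left (by norm_num)).1 h
  let op : ZMod (2 * k) → ZMod (2 * k) → ZMod (2 * k) :=
    fun x y => if p x = 0 then x + y else x - y
  let f : DihedralGroup k → ZMod (2 * k) := fun g =>
    match g with
    | .r a => D a
    | .sr a => 1 - D a
  have hfr : ∀ a, f (.r a) = D a := fun a => rfl
  have hfs : ∀ a, f (.sr a) = 1 - D a := fun a => rfl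
  have hps : ∀ a, p (1 - D a) = 1 := by
    intro a
    rw [map_sub, map_one, hpD, sub_zero]
  have hfinj : Function.Injective f := by
    rintro (a | a) (b | b) h <;> simp only [hfr, hfs] at h
    · rw [hDinj h]
    · have := congrArg p h
      rw [hpD, hps] at this
      exact absurd this.symm h10
    · have := congrArg p h
      rw [hpD, hps] at this
      exact absurd this h10
    · rw [hDinj (sub_right_injective h)]
  have hfbij : Function.Bijective f := by
    rw [Fintype.bijective_iff_injective_and_card]
    exact ⟨hfinj, by rw [DihedralGroup.card, ZMod.card]⟩
  have hop : ∀ x y, f (x * y) = op (f x) (f y) := by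
    rintro (a | a) (b | b) <;>
      simp only [DihedralGroup.r_mul_r, DihedralGroup.r_mul_sr, DihedralGroup.sr_mul_r,
        DihedralGroup.sr_mul_sr, hfr, hfs, op, hpD, hps, h10, if_true, if_false, map_add,
        map_sub] <;> ring
  refine ⟨op, ?_, ⟨⟨?_, f 1, ?_, ?_⟩, ?_⟩, (Equiv.ofBijective f hfbij).symm, ?_⟩
  · intro i j
    simp only [op, map_natCast, ZMod.natCast_eq_zero_iff_even]
    split_ifs with h
    · rw [h.neg_one_pow, one_mul]
    · rw [(Nat.not_even_iff_odd.1 h).neg_one_pow]; ring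
  · intro a b c
    obtain ⟨a, rfl⟩ := hfbij.2 a
    obtain ⟨b, rfl⟩ := hfbij.2 b
    obtain ⟨c, rfl⟩ := hfbij.2 c
    simp only [← hop, mul_assoc]
  · intro a
    obtain ⟨a, rfl⟩ := hfbij.2 a
    simp only [← hop, one_mul, mul_one, and_self]
  · intro a
    obtain ⟨a, rfl⟩ := hfbij.2 a
    exact ⟨f a⁻¹, by simp only [← hop, mul_inv_cancel, inv_mul_cancel, and_self]⟩
  · intro a b c
    simp only [op]
    split_ifs <;> ring
  · intro x y
    rw [Equiv.symm_apply_eq]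
    simp only [Equiv.ofBijective_apply, hop]
    congr 1
    · exact ((Equiv.ofBijective f hfbij).apply_symm_apply x).symm
    · exact ((Equiv.ofBijective f hfbij).apply_symm_apply y).symm
end

section
/- For every even integer n ≥ 4, the cyclic group ℤ/nℤ is bad: there exists a group operation ∘ on ℤ/nℤ such that (ℤ/nℤ, +, ∘) is a skew brace and some subgroup of (ℤ/nℤ, ∘) is not a left ideal of (ℤ/nℤ, +, ∘). -/
/-- **Example 3.3.** For every even `n ≥ 4`, the cyclic group `ℤ/nℤ` is bad: some skew
brace operation `∘` on `ℤ/nℤ` admits a `∘`-subgroup that is not a left ideal. -/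
theorem cyclic_even_bad (n : ℕ) (hn : 4 ≤ n) (heven : Even n) :
    ∃ op : ZMod n → ZMod n → ZMod n,
      IsSkewBraceAdd op ∧
      ∃ S : Set (ZMod n), IsCircSubgroupAdd op S ∧
        ¬ ∃ I : AddSubgroup (ZMod n), (I : Set (ZMod n)) = S ∧ IsLeftIdealAdd op I := by
  classical
  have h2n : 2 ∣ n := heven.two_dvd
  set φ : ZMod n →+* ZMod 2 := ZMod.castHom h2n (ZMod 2) with hφ
  have h01 : ∀ x : ZMod 2, x = 0 ∨ x = 1 := by decide
  have h11 : (1 : ZMod 2) + 1 = 0 := by decide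
  have hneg : ∀ x : ZMod 2, -x = x := by decide
  obtain ⟨s, hs0, hs1⟩ : ∃ s : ZMod n → ZMod n, (∀ a, φ a = 0 → s a = 1) ∧
      (∀ a, φ a = 1 → s a = -1) :=
    ⟨fun a => if φ a = 0 then 1 else -1, fun a h => by simp [h], fun a h => by simp [h]⟩
  have hss : ∀ a, s a * s a = 1 := by
    intro a
    rcases h01 (φ a) with h | h
    · simp [hs0 a h]
    · simp [hs1 a h]
  have hφs : ∀ a b, φ (s a * b) = φ b := by
    intro a b
    rcases h01 (φ a) with h | h
    · simp [hs0 a h]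
    · rw [hs1 a h, neg_one_mul, map_neg, hneg]
  have hadd : ∀ a b, s (a + s a * b) = s a * s b := by
    intro a b
    have h3 : φ (a + s a * b) = φ a + φ b := by rw [map_add, hφs]
    rcases h01 (φ a) with h | h <;> rcases h01 (φ b) with h' | h' <;> rw [h, h'] at h3
    · rw [hs0 a h, hs0 b h'] at *; rw [hs0 _ (by simpa using h3)]; ring
    · rw [hs0 a h, hs1 b h'] at *; rw [hs1 _ (by simpa using h3)]; ring
    · rw [hs1 a h, hs0 b h'] at *; rw [hs1 _ (by simpa using h3)]; ring
    · rw [hs1 a h, hs1 b h'] at *; rw [hs0 _ (by rw [h3, h11])]; ring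
  have s0 : s 0 = 1 := hs0 0 (map_zero φ)
  have s1 : s 1 = -1 := hs1 1 (map_one φ)
  have hinv : ∀ a, s (-(s a * a)) = s a := by
    intro a
    have h3 : φ (-(s a * a)) = φ a := by rw [map_neg, hφs, hneg]
    rcases h01 (φ a) with h | h
    · rw [hs0 _ (h3.trans h), hs0 a h]
    · rw [hs1 _ (h3.trans h), hs1 a h]
  refine ⟨fun a b => a + s a * b, ⟨⟨?_, 0, ?_, ?_⟩, ?_⟩, {0, 1}, ⟨?_, ?_, ?_⟩, ?_⟩
  · intro a b c
    simp only [hadd]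
    ring
  · intro a
    simp [s0]
  · intro a
    refine ⟨-(s a * a), ?_, ?_⟩
    · have := hss a
      linear_combination (-a) * this
    · simp only [hinv]
      ring
  · intro a b c
    ring
  · simp
  · intro a ha b hb
    rcases ha with rfl | rfl <;> rcases hb with rfl | rfl <;> simp [s0, s1]
  · intro a ha
    refine ⟨a, ha, ?_⟩
    rcases ha with rfl | rfl <;> simp [s1]
  · rintro ⟨I, hI, -⟩
    have m1 : (1 : ZMod n) ∈ I := by
      rw [← SetLike.mem_coe, hI]; simp
    have m2 : (1 + 1 : ZMod n) ∈ (I : Set (ZMod n)) := I.add_mem m1 m1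
    rw [hI] at m2
    rcases m2 with h | h
    · have h' : ((2 : ℕ) : ZMod n) = 0 := by push_cast; linear_combination h
      rw [ZMod.natCast_eq_zero_iff] at h'
      have := Nat.le_of_dvd (by norm_num) h'
      omega
    · have h' : ((1 : ℕ) : ZMod n) = 0 := by
        push_cast; linear_combination (Set.mem_singleton_iff.mp h)
      rw [ZMod.natCast_eq_zero_iff] at h'
      have := Nat.le_of_dvd (by norm_num) h'
      omega
end

section
/- Let p, q be primes with q dividing p − 1, and let m, n ≥ 1 be integers. Then the group ℤ/pⁿℤ × ℤ/qᵐℤ (with componentwise addition +) is bad: there exists a group operation ∘ on ℤ/pⁿℤ × ℤ/qᵐℤ such that (ℤ/pⁿℤ × ℤ/qᵐℤ, +, ∘) is a skew brace and some subgroup of (ℤ/pⁿℤ × ℤ/qᵐℤ, ∘) is not a left ideal. Explicitly, choosing an integer κ whose residue modulo pⁿ has multiplicative order q, the operation (δ,ξ) ∘ (δ',ξ') = (δ + κ^ξ δ', ξ + ξ') works, and (ℤ/pⁿℤ × ℤ/qᵐℤ, ∘) is the corresponding nonabelian semidirect product ℤ/pⁿℤ ⋊ ℤ/qᵐℤ.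 -/
/-- **Example 3.4.** Let `p, q` be primes with `q ∣ p - 1` and `m, n ≥ 1`. Then
`ℤ/pⁿℤ × ℤ/qᵐℤ` is bad. Explicitly, there is a `κ` whose residue mod `pⁿ` has
multiplicative order `q`, and for any such `κ` the operation
`(δ,ξ) ∘ (δ',ξ') = (δ + κ^ξ δ', ξ + ξ')` makes `(ℤ/pⁿℤ × ℤ/qᵐℤ, +, ∘)` a skew brace
whose `∘`-group is the (nonabelian) semidirect product `ℤ/pⁿℤ ⋊ ℤ/qᵐℤ`, and some
`∘`-subgroup is not a left ideal. -/
theorem cyclic_pq_bad (p q : ℕ) (hp : p.Prime) (hq : q.Prime) (hdvd : q ∣ p - 1)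
    (m n : ℕ) (hm : 1 ≤ m) (hn : 1 ≤ n) :
    (∃ κ : ℕ, orderOf (κ : ZMod (p ^ n)) = q) ∧
    ∀ κ : ℕ, orderOf (κ : ZMod (p ^ n)) = q →
      ∀ op : ZMod (p ^ n) × ZMod (q ^ m) → ZMod (p ^ n) × ZMod (q ^ m) →
          ZMod (p ^ n) × ZMod (q ^ m),
        (∀ x y, op x y = (x.1 + (κ : ZMod (p ^ n)) ^ x.2.val * y.1, x.2 + y.2)) →
        IsSkewBraceAdd op ∧ (¬ ∀ x y, op x y = op y x) ∧
        ∃ S : Set (ZMod (p ^ n) × ZMod (q ^ m)), IsCircSubgroupAdd op S ∧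
          ¬ ∃ I : AddSubgroup (ZMod (p ^ n) × ZMod (q ^ m)),
            (I : Set (ZMod (p ^ n) × ZMod (q ^ m))) = S ∧ IsLeftIdealAdd op I := by
  have hp1 : 1 < p := hp.one_lt
  have hqp : q < p := by
    have := Nat.le_of_dvd (by omega) hdvd
    omega
  have : NeZero (p ^ n) := ⟨pow_ne_zero _ hp.ne_zero⟩
  have : NeZero (q ^ m) := ⟨pow_ne_zero _ hq.ne_zero⟩
  have : Fact (1 < q ^ m) := ⟨Nat.one_lt_pow (by omega) hq.one_lt⟩
  have : Fact q.Prime := ⟨hq⟩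
  refine ⟨?_, ?_⟩
  · have hc : q ∣ Nat.card (ZMod (p ^ n))ˣ := by
      rw [Nat.card_eq_fintype_card, ZMod.card_units_eq_totient,
        Nat.totient_prime_pow hp (by omega)]
      exact hdvd.mul_left _
    obtain ⟨u, hu⟩ := exists_prime_orderOf_dvd_card' q hc
    refine ⟨(u : ZMod (p ^ n)).val, ?_⟩
    rw [ZMod.natCast_zmod_val, orderOf_units, hu]
  intro κ hκ op hop
  obtain ⟨f, hf⟩ : ∃ f : ZMod (q ^ m) → ZMod (p ^ n),
      ∀ x, f x = (κ : ZMod (p ^ n)) ^ x.val := ⟨_, fun _ => rfl⟩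
  simp only [← hf] at hop
  have hκq : (κ : ZMod (p ^ n)) ^ (q ^ m) = 1 := by
    apply orderOf_dvd_iff_pow_eq_one.mp
    rw [hκ]
    exact dvd_pow_self q (by omega)
  have fadd : ∀ a b, f (a + b) = f a * f b := by
    intro a b
    rw [hf, hf, hf, ZMod.val_add, ← pow_add]
    conv_rhs => rw [← Nat.mod_add_div (a.val + b.val) (q ^ m), pow_add, pow_mul, hκq, one_pow,
      mul_one]
  have f0 : f 0 = 1 := by simp [hf]
  have f1 : f 1 = κ := by rw [hf, ZMod.val_one, pow_one]
  have fneg : ∀ a, f a * f (-a) = 1 := fun a => by rw [← fadd, add_neg_cancel, f0]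
  have hκ1 : (κ : ZMod (p ^ n)) ≠ 1 := by
    intro h
    rw [h, orderOf_one] at hκ
    exact hq.one_lt.ne hκ
  refine ⟨⟨⟨?_, (0, 0), ?_, ?_⟩, ?_⟩, ?_, ?_⟩
  · intro a b c
    simp only [hop, fadd]
    ext
    · simp only; ring
    · simp only; ring
  · intro a
    simp [hop, f0]
  · intro a
    refine ⟨(-(f (-a.2) * a.1), -a.2), ?_⟩
    simp only [hop]
    constructor
    · ext
      · simp only
        linear_combination (-a.1) * fneg a.2
      · simp
    · ext
      · simp
      · simp
  · intro a b c
    simp only [hop]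
    ext
    · simp; ring
    · simp; ring
  · intro h
    have := h (0, 1) (1, 0)
    simp [hop, f1, f0] at this
    exact hκ1 this
  · refine ⟨{x | x.1 = 1 - f x.2}, ⟨?_, ?_, ?_⟩, ?_⟩
    · simp [f0]
    · intro a ha b hb
      simp only [Set.mem_ofPred_eq] at ha hb ⊢
      simp only [hop, fadd, ha, hb]
      ring
    · intro a ha
      simp only [Set.mem_ofPred_eq] at ha
      refine ⟨(1 - f (-a.2), -a.2), by simp, ?_, ?_⟩
      · simp only [hop, ha]
        ext
        · simp only [Prod.fst_zero]
          linear_combination (-1) * fneg a.2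
        · simp
      · simp only [hop, ha]
        ext
        · simp only [Prod.fst_zero]
          linear_combination (-1) * fneg a.2
        · simp
    · rintro ⟨I, hI, -⟩
      have h1 : ((1 - f 1, 1) : ZMod (p ^ n) × ZMod (q ^ m)) ∈ I := by
        rw [← SetLike.mem_coe, hI]
        simp
      have h2 := I.nsmul_mem h1 (q ^ m)
      rw [← SetLike.mem_coe, hI] at h2
      have hz : (q ^ m) • (1 : ZMod (q ^ m)) = 0 := by
        rw [nsmul_eq_mul, ZMod.natCast_self, zero_mul]
      simp only [Set.mem_ofPred_eq, Prod.smul_mk, hz, f0, f1, sub_self, nsmul_eq_mul] at h2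
      have hcop : Nat.Coprime (q ^ m) (p ^ n) :=
        Nat.Coprime.pow _ _ ((Nat.coprime_primes hq hp).mpr hqp.ne)
      have hu : IsUnit ((q ^ m : ℕ) : ZMod (p ^ n)) := (ZMod.isUnit_iff_coprime _ _).mpr hcop
      have h3 := (hu.mul_right_eq_zero).mp h2
      exact hκ1 (sub_eq_zero.mp h3).symm
end

section
/- Let p be a prime and let 1 ≤ m ≤ n be integers. On the group ℤ/pⁿℤ × ℤ/pᵐℤ with componentwise addition +, define (i,j) ∘ (r,s) = (i+r, j+s+ir) (where the product ir is reduced modulo pᵐ, which is well-defined since m ≤ n). Then ∘ is a group operation, the pair (ℤ/pⁿℤ × ℤ/pᵐℤ, +, ∘) is a skew brace (in fact a brace), and if p is odd, the map (i,j) ↦ (i, j + i(i−1)/2) is a group isomorphism from (ℤ/pⁿℤ × ℤ/pᵐℤ, +) to (ℤ/pⁿℤ × ℤ/pᵐℤ, ∘). -/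
/-- **Example 3.5.** Let `p` be a prime and `1 ≤ m ≤ n`. On `ℤ/pⁿℤ × ℤ/pᵐℤ` the
operation `(i,j) ∘ (r,s) = (i+r, j+s+ir)` (with `ir` reduced mod `pᵐ`) is a group
operation making `(ℤ/pⁿℤ × ℤ/pᵐℤ, +, ∘)` a skew brace (in fact a brace); if `p` is odd,
`(i,j) ↦ (i, j + i(i-1)/2)` is an isomorphism from the additive group to the
`∘`-group. -/
theorem cyclic_pp_brace (p : ℕ) (hp : p.Prime) (m n : ℕ) (hm : 1 ≤ m) (hmn : m ≤ n) :
    ∀ op : ZMod (p ^ n) × ZMod (p ^ m) → ZMod (p ^ n) × ZMod (p ^ m) →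
        ZMod (p ^ n) × ZMod (p ^ m),
      (∀ x y, op x y = (x.1 + y.1,
        x.2 + y.2 + ZMod.castHom (pow_dvd_pow p hmn) (ZMod (p ^ m)) (x.1 * y.1))) →
      IsSkewBraceAdd op ∧
      (Odd p → ∃ g : ZMod (p ^ n) × ZMod (p ^ m) → ZMod (p ^ n) × ZMod (p ^ m),
        (∀ x, g x = (x.1, x.2 + ((x.1.val * (x.1.val - 1) / 2 : ℕ) : ZMod (p ^ m)))) ∧
        Function.Bijective g ∧ ∀ x y, g (x + y) = op (g x) (g y)) := by
  intro op hop
  set φ := ZMod.castHom (pow_dvd_pow p hmn) (ZMod (p ^ m)) with hφ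
  refine ⟨⟨⟨?_, 0, ?_, ?_⟩, ?_⟩, ?_⟩
  · intro a b c
    simp only [hop, map_mul, map_add]
    ext1 <;> simp only <;> ring
  · intro a
    simp [hop]
  · intro a
    refine ⟨(-a.1, -a.2 + φ (a.1 * a.1)), ?_, ?_⟩ <;> simp [hop]
  · intro a b c
    simp only [hop, Prod.fst_add, Prod.snd_add, map_mul, map_add]
    ext1 <;> simp <;> ring
  · intro hodd
    haveI : NeZero (p ^ n) := ⟨pow_ne_zero _ hp.ne_zero⟩
    have h2 : IsUnit (2 : ZMod (p ^ m)) := by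
      have : Nat.Coprime 2 (p ^ m) := (Nat.coprime_two_left.mpr hodd).pow_right m
      simpa using (ZMod.isUnit_iff_coprime 2 (p ^ m)).mpr this
    have key : ∀ i : ZMod (p ^ n),
        2 * ((i.val * (i.val - 1) / 2 : ℕ) : ZMod (p ^ m)) = φ i * (φ i - 1) := by
      intro i
      have hc : ((i.val : ℕ) : ZMod (p ^ m)) = φ i := by
        rw [← map_natCast φ, ZMod.natCast_zmod_val]
      have he : 2 * (i.val * (i.val - 1) / 2) = i.val * (i.val - 1) :=
        Nat.mul_div_cancel' (Nat.even_mul_pred_self i.val).two_dvd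
      have he' : 2 * (i.val * (i.val - 1) / 2) + i.val = i.val * i.val := by
        rw [he]
        rcases i.val with _ | k
        · rfl
        · simp; ring
      have := congrArg (Nat.cast : ℕ → ZMod (p ^ m)) he'
      rw [Nat.cast_add, Nat.cast_mul, Nat.cast_mul i.val, hc] at this
      push_cast at this ⊢
      linear_combination this
    refine ⟨_, fun x => rfl, ⟨?_, ?_⟩, ?_⟩
    · rintro ⟨a, b⟩ ⟨c, d⟩ h
      simp only [Prod.mk.injEq] at h
      obtain ⟨rfl, h⟩ := h
      simpa using h
    · rintro ⟨a, b⟩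
      exact ⟨(a, b - ((a.val * (a.val - 1) / 2 : ℕ) : ZMod (p ^ m))), by simp⟩
    · intro x y
      simp only [hop]
      ext1
      · rfl
      · apply h2.mul_left_cancel
        have h1 := key (x.1 + y.1)
        have h3 := key x.1
        have h4 := key y.1
        simp only [Prod.fst_add, Prod.snd_add, map_mul, map_add] at *
        linear_combination h1 - h3 - h4
end

section
/- Let p be an odd prime and let 1 ≤ m ≤ n be integers. Then the group ℤ/pⁿℤ × ℤ/pᵐℤ is bad: there exists a group operation ∘ on ℤ/pⁿℤ × ℤ/pᵐℤ such that (ℤ/pⁿℤ × ℤ/pᵐℤ, +, ∘) is a skew brace and some subgroup of (ℤ/pⁿℤ × ℤ/pᵐℤ, ∘) is not a left ideal of the skew brace. -/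
/-- **Example 3.5.** For an odd prime `p` and `1 ≤ m ≤ n`, the group `ℤ/pⁿℤ × ℤ/pᵐℤ` is
bad: some skew brace operation `∘` admits a `∘`-subgroup that is not a left ideal. -/
theorem cyclic_pp_bad (p : ℕ) (hp : p.Prime) (hodd : Odd p)
    (m n : ℕ) (hm : 1 ≤ m) (hmn : m ≤ n) :
    ∃ op : ZMod (p ^ n) × ZMod (p ^ m) → ZMod (p ^ n) × ZMod (p ^ m) →
        ZMod (p ^ n) × ZMod (p ^ m),
      IsSkewBraceAdd op ∧
      ∃ S : Set (ZMod (p ^ n) × ZMod (p ^ m)), IsCircSubgroupAdd op S ∧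
        ¬ ∃ I : AddSubgroup (ZMod (p ^ n) × ZMod (p ^ m)),
          (I : Set (ZMod (p ^ n) × ZMod (p ^ m))) = S ∧ IsLeftIdealAdd op I := by
  have hd : p ^ m ∣ p ^ n := pow_dvd_pow p hmn
  let φ : ZMod (p ^ n) →+* ZMod (p ^ m) := ZMod.castHom hd (ZMod (p ^ m))
  have hcop : Nat.Coprime 2 (p ^ m) :=
    Nat.Coprime.pow_right m (Nat.coprime_two_left.mpr hodd)
  obtain ⟨h, hh⟩ : ∃ h : ZMod (p ^ m), 2 * h = 1 :=
    ⟨((2 : ℕ) : ZMod (p ^ m))⁻¹, by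
      have := ZMod.coe_mul_inv_eq_one 2 hcop
      exact_mod_cast this⟩
  have h1 : (1 : ZMod (p ^ m)) ≠ 0 := by
    have : Fact (1 < p ^ m) := ⟨Nat.one_lt_pow (by omega) hp.one_lt⟩
    exact one_ne_zero
  refine ⟨fun a b => (a.1 + b.1, a.2 + b.2 + φ a.1 * φ b.1), ⟨⟨?_, 0, ?_, ?_⟩, ?_⟩,
    {a | a.2 = h * φ a.1 ^ 2}, ⟨?_, ?_, ?_⟩, ?_⟩
  · intro a b c
    ext <;> simp <;> ring
  · intro a
    constructor <;> ext <;> simp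
  · intro a
    refine ⟨(-a.1, -a.2 + φ a.1 * φ a.1), ?_, ?_⟩ <;> ext <;> simp
  · intro a b c
    ext <;> simp <;> ring
  · simp
  · intro a ha b hb
    simp only [Set.mem_setOf_eq, map_add] at *
    rw [ha, hb]
    linear_combination (-(φ a.1 * φ b.1)) * hh
  · intro a ha
    refine ⟨(-a.1, -a.2 + φ a.1 * φ a.1), ?_, ?_, ?_⟩
    · simp only [Set.mem_setOf_eq, map_neg] at *
      rw [ha]
      linear_combination (-(φ a.1 * φ a.1)) * hh
    · ext <;> simp
    · ext <;> simp
  · rintro ⟨I, hI, -⟩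
    have hmem : ∀ a, a ∈ I ↔ a.2 = h * φ a.1 ^ 2 := fun a => by
      rw [← SetLike.mem_coe, hI]; rfl
    have m1 : ((1 : ZMod (p ^ n)), h) ∈ I := by rw [hmem]; simp
    have m2 := (hmem _).1 (I.add_mem m1 m1)
    simp only [Prod.mk_add_mk, map_add, map_one] at m2
    apply h1
    linear_combination -m2 - hh
end

section
/- Let N be a finite cyclic group of odd order such that q does not divide p − 1 for all prime divisors p, q of |N|. Then N is good: for every group operation ∘ on N such that (N,·,∘) is a skew brace, every subgroup of (N,∘) is a left ideal of (N,·,∘). -/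
section OddCyclicHelpers

lemma geom_dvd_imp (m u k : ℕ) (hm : 0 < m) (hu : 2 ≤ u)
    (h : ∀ p : ℕ, p.Prime → p ∣ m → p ≠ 2 ∧ p ∣ u - 1)
    (hk : m ∣ ∑ i ∈ Finset.range k, u ^ i) : m ∣ k := by
  rcases Nat.eq_zero_or_pos k with rfl | hk0
  · simp
  rw [← Nat.factorization_le_iff_dvd hm.ne' hk0.ne']
  intro p
  by_cases hp : p.Prime
  swap
  · simp [Nat.factorization_eq_zero_of_not_prime, hp]
  by_cases hpm : p ∣ m
  swap
  · simp [Nat.factorization_eq_zero_of_not_dvd hpm]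
  obtain ⟨hp2, hpu⟩ := h p hp hpm
  haveI : Fact p.Prime := ⟨hp⟩
  set s := ∑ i ∈ Finset.range k, u ^ i with hs
  have hs0 : s ≠ 0 := by
    have : u ^ 0 ≤ s := Finset.single_le_sum (f := fun i => u ^ i)
      (fun _ _ => Nat.zero_le _) (Finset.mem_range.2 hk0)
    simp at this
    omega
  have h1 : m.factorization p ≤ s.factorization p :=
    (Nat.factorization_le_iff_dvd hm.ne' hs0).2 hk p
  have hnu : ¬ p ∣ u := by
    intro hd
    have : p ∣ u - (u - 1) := Nat.dvd_sub hd hpu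
    rw [show u - (u - 1) = 1 by omega] at this
    exact hp.one_lt.ne' (Nat.dvd_one.1 this)
  have h2 := padicValNat.pow_sub_pow (p := p) (hp.odd_of_ne_two hp2) (x := u) (y := 1)
    (by omega) hpu hnu (n := k) hk0.ne'
  have h3 : u ^ k - 1 ^ k = (u - 1) * s := by
    have := Nat.geomSum_eq hu k
    have hd : (u - 1) ∣ u ^ k - 1 := by simpa using Nat.sub_dvd_pow_sub_pow u 1 k
    rw [hs, this, one_pow, Nat.mul_div_cancel' hd]
  rw [h3, padicValNat.mul (by omega) hs0] at h2
  rw [Nat.factorization_def _ hp, Nat.factorization_def _ hp] at *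
  omega

lemma geom_surj (m u : ℕ) (hm : 0 < m) (hu : 2 ≤ u)
    (h : ∀ p : ℕ, p.Prime → p ∣ m → p ≠ 2 ∧ p ∣ u - 1) (j : ℕ) :
    ∃ k, (∑ i ∈ Finset.range k, u ^ i) ≡ j [MOD m] := by
  have hcop : Nat.Coprime m u := by
    refine Nat.coprime_of_dvd fun p hp hpm hd => ?_
    have : p ∣ u - (u - 1) := Nat.dvd_sub hd (h p hp hpm).2
    rw [show u - (u - 1) = 1 by omega] at this
    exact hp.one_lt.ne' (Nat.dvd_one.1 this)
  have key : ∀ a b : ℕ, a ≤ b → b < m →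
      (∑ i ∈ Finset.range a, u ^ i) ≡ (∑ i ∈ Finset.range b, u ^ i) [MOD m] → a = b := by
    intro a b hab hb hmod
    obtain ⟨d, rfl⟩ := Nat.exists_eq_add_of_le hab
    rw [Finset.sum_range_add] at hmod
    have h0 : 0 ≡ ∑ x ∈ Finset.range d, u ^ (a + x) [MOD m] :=
      Nat.ModEq.add_left_cancel' (∑ i ∈ Finset.range a, u ^ i) (by rw [add_zero]; exact hmod)
    have h1 : m ∣ u ^ a * ∑ x ∈ Finset.range d, u ^ x := by
      rw [Finset.mul_sum]
      simp only [← pow_add]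
      exact (Nat.modEq_zero_iff_dvd).1 h0.symm
    have h2 := geom_dvd_imp m u d hm hu h ((hcop.pow_right a).dvd_of_dvd_mul_left h1)
    have := Nat.eq_zero_of_dvd_of_lt h2 (by omega)
    omega
  have hsurj := Finset.surjOn_of_injOn_of_card_le (s := Finset.range m) (t := Finset.range m)
    (fun k => (∑ i ∈ Finset.range k, u ^ i) % m)
    (by intro x _; simpa using Nat.mod_lt _ hm)
    (by
      intro a ha b hb hab
      simp only [Finset.coe_range, Set.mem_Iio] at ha hb
      rcases le_total a b with hle | hle
      · exact key a b hle hb hab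
      · exact (key b a hle ha hab.symm).symm)
    le_rfl
  obtain ⟨k, _, hk⟩ := hsurj (show j % m ∈ _ by simpa using Nat.mod_lt _ hm)
  exact ⟨k, hk⟩

lemma groupOp_iterate_card {G : Type*} [Finite G] (op : G → G → G) (h : IsGroupOp op)
    (a x : G) : (op a)^[Nat.card G] x = x := by
  obtain ⟨hassoc, e, he, hinv⟩ := h
  choose inv hinv1 hinv2 using hinv
  letI : Group G := @Group.ofLeftAxioms G ⟨op⟩ ⟨inv⟩ ⟨e⟩ hassoc (fun a => (he a).1) hinv2
  have : (op a) = fun y => a * y := rfl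
  rw [this, mul_left_iterate]
  simp

lemma brace_exponent (N : Type*) [Group N] [Finite N] (hcyc : IsCyclic N)
    (hodd : Odd (Nat.card N))
    (hpq : ∀ p q : ℕ, p.Prime → q.Prime → p ∣ Nat.card N → q ∣ Nat.card N →
      ¬ q ∣ p - 1) (op : N → N → N) (hop : IsSkewBrace op) (a : N) :
    ∃ u : ℕ, 2 ≤ u ∧ (∀ x, op a x = a * x ^ u) ∧
      (∀ k x, (op a)^[k] x = a ^ (∑ i ∈ Finset.range k, u ^ i) * x ^ (u ^ k)) ∧
      ∀ p : ℕ, p.Prime → p ∣ Nat.card N → p ≠ 2 ∧ p ∣ u - 1 := by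
  letI : CommGroup N := hcyc.commGroup
  have hn : 0 < Nat.card N := Nat.card_pos
  obtain ⟨hg, hb⟩ := hop
  let γ : N →* N := MonoidHom.mk' (fun b => a⁻¹ * op a b) (by
    intro b c
    rw [hb]; group)
  obtain ⟨z, hz⟩ := MonoidHom.map_cyclic γ
  let u : ℕ := (z % (Nat.card N : ℤ)).toNat + 2 * Nat.card N
  have hu : 2 ≤ u := by
    have : u = (z % (Nat.card N : ℤ)).toNat + 2 * Nat.card N := rfl
    omega
  have hpow : ∀ x : N, x ^ u = x ^ z := by
    intro x
    have h0 : 0 ≤ z % (Nat.card N : ℤ) := Int.emod_nonneg _ (by omega)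
    rw [pow_add, mul_comm 2, pow_mul, pow_card_eq_one', one_pow, mul_one, ← zpow_natCast,
      Int.toNat_of_nonneg h0]
    conv_rhs => rw [← Int.emod_add_mul_ediv z (Nat.card N : ℤ)]
    rw [zpow_add, zpow_mul, zpow_natCast, pow_card_eq_one', one_zpow, mul_one]
  have hop' : ∀ x, op a x = a * x ^ u := by
    intro x
    have : a⁻¹ * op a x = x ^ z := hz x
    rw [hpow, ← this]; group
  have hit : ∀ k x, (op a)^[k] x = a ^ (∑ i ∈ Finset.range k, u ^ i) * x ^ (u ^ k) := by
    intro k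
    induction k with
    | zero => intro x; simp
    | succ k ih =>
      intro x
      rw [Function.iterate_succ_apply', ih, hop', mul_pow, ← pow_mul, ← pow_mul,
        Finset.sum_range_succ', pow_succ u k, ← mul_assoc]
      congr 1
      rw [pow_add, mul_comm]
      simp [Finset.sum_mul, pow_succ]
  refine ⟨u, hu, hop', hit, ?_⟩
  intro p hp hpn
  refine ⟨?_, ?_⟩
  · rintro rfl
    exact (Nat.not_even_iff_odd.2 hodd) (even_iff_two_dvd.2 hpn)
  have h1 : a ^ (∑ i ∈ Finset.range (Nat.card N), u ^ i) = 1 := by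
    have := hit (Nat.card N) 1
    rw [groupOp_iterate_card op hg] at this
    simpa using this.symm
  obtain ⟨g, hgen⟩ := hcyc.exists_generator
  have h2 : g ^ (u ^ Nat.card N) = g ^ 1 := by
    have := hit (Nat.card N) g
    rw [groupOp_iterate_card op hg, h1, one_mul] at this
    simpa using this.symm
  rw [pow_eq_pow_iff_modEq, orderOf_eq_card_of_forall_mem_zpowers hgen] at h2
  have h3 : u ^ Nat.card N ≡ 1 [MOD p] := h2.of_dvd hpn
  haveI : Fact p.Prime := ⟨hp⟩
  have h4 : (u : ZMod p) ^ Nat.card N = 1 := by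
    have := (ZMod.natCast_eq_natCast_iff _ _ _).2 h3
    simpa using this
  have hu0 : (u : ZMod p) ≠ 0 := by
    intro h0
    rw [h0, zero_pow hn.ne'] at h4
    exact zero_ne_one h4
  have h5 := ZMod.pow_card_sub_one_eq_one hu0
  have hc : Nat.Coprime (Nat.card N) (p - 1) :=
    Nat.coprime_of_dvd fun q hq hqn hqp => hpq p q hp hq hpn hqn hqp
  have h6 : orderOf (u : ZMod p) ∣ 1 := by
    rw [← hc.gcd_eq_one]
    exact Nat.dvd_gcd (orderOf_dvd_of_pow_eq_one h4) (orderOf_dvd_of_pow_eq_one h5)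
  have h7 : (u : ZMod p) = 1 := orderOf_eq_one_iff.1 (Nat.dvd_one.1 h6)
  have h8 : 1 ≡ u [MOD p] := (ZMod.natCast_eq_natCast_iff _ _ _).1 (by simp [h7])
  exact (Nat.modEq_iff_dvd' (by omega)).1 h8

end OddCyclicHelpers

/-- A finite cyclic group `N` of odd order with `q ∤ p - 1` for all prime divisors
`p, q` of `|N|` is good: for every skew brace operation `∘` on `N`, every subgroup of
`(N, ∘)` is a left ideal of `(N, ·, ∘)`. -/
theorem odd_cyclic_good (N : Type*) [Group N] [Finite N] (hcyc : IsCyclic N)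
    (hodd : Odd (Nat.card N))
    (hpq : ∀ p q : ℕ, p.Prime → q.Prime → p ∣ Nat.card N → q ∣ Nat.card N →
      ¬ q ∣ p - 1) :
    ∀ op : N → N → N, IsSkewBrace op →
      ∀ S : Set N, IsCircSubgroup op S →
        ∃ I : Subgroup N, (I : Set N) = S ∧ IsLeftIdeal op I := by
  intro op hop S hS
  letI : CommGroup N := hcyc.commGroup
  have hE := brace_exponent N hcyc hodd hpq op hop
  have hn : 0 < Nat.card N := Nat.card_pos
  obtain ⟨hS1, hSm, -⟩ := hS
  have hpowS : ∀ a ∈ S, ∀ j : ℕ, a ^ j ∈ S := by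
    intro a ha j
    obtain ⟨u, hu, -, hit, hp⟩ := hE a
    obtain ⟨k, hk⟩ := geom_surj (Nat.card N) u hn hu hp j
    have h1 : ∀ k, (op a)^[k] 1 ∈ S := by
      intro k
      induction k with
      | zero => simpa using hS1
      | succ k ih => rw [Function.iterate_succ_apply']; exact hSm a ha _ ih
    have h2 := h1 k
    rw [hit, one_pow, mul_one] at h2
    rwa [← pow_eq_pow_iff_modEq.2 (hk.of_dvd (orderOf_dvd_natCard a))]
  have hmul : ∀ a ∈ S, ∀ b ∈ S, a * b ∈ S := by
    intro a ha b hb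
    obtain ⟨u, hu, hop', -, hp⟩ := hE a
    have hcop : Nat.Coprime (Nat.card N) u := by
      refine Nat.coprime_of_dvd fun p hpp hpm hd => ?_
      have : p ∣ u - (u - 1) := Nat.dvd_sub hd (hp p hpp hpm).2
      rw [show u - (u - 1) = 1 by omega] at this
      exact hpp.one_lt.ne' (Nat.dvd_one.1 this)
    have hfin : b ∈ (Subgroup.zpowers b : Set N) := Subgroup.mem_zpowers b
    obtain ⟨v, hv⟩ := exists_pow_eq_self_of_coprime
      (n := u) (x := b) (hcop.symm.coprime_dvd_right (orderOf_dvd_natCard b))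
    have := hSm a ha _ (hpowS b hb v)
    rwa [hop', ← pow_mul, mul_comm v u, pow_mul, hv] at this
  refine ⟨{ carrier := S, one_mem' := hS1, mul_mem' := fun {a b} ha hb => hmul a ha b hb,
            inv_mem' := ?_ }, rfl, ?_⟩
  · intro a ha
    have h := hpowS a ha (Nat.card N - 1)
    have h2 : a⁻¹ = a ^ (Nat.card N - 1) := by
      rw [inv_eq_iff_mul_eq_one, ← pow_succ', Nat.sub_add_cancel hn, pow_card_eq_one']
    show a⁻¹ ∈ S
    rwa [h2]
  · intro a b hb
    obtain ⟨u, -, hop', -⟩ := hE a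
    rw [hop', inv_mul_cancel_left]
    exact hpowS b hb u
end
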